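/- arXiv:2503.14968 — 7 statements merged into one kernel-verified Lean document; each statement's English description precedes it below -/
import Mathlib

section
/- Let 0 < ε ≪ 1, let n be sufficiently large and divisible by 3, and let H be a (1,3)-partite 4-graph with partition classes Q and P, 3|Q| = |P| = n, such that every vertex of Q is adjacent to every vertex of P, and for any u ∈ Q and v, v′ ∈ P with deg({u,v,v′}) > 0 we have deg({u,v}) + deg({u,v′}) > (1/2 + ε)n². Then for every set A ⊆ V(H) with |A ∩ Q| = 1 and |A ∩ P| = 3, there are at least (ε^{23/2}/(24!·2^{37/2}))·n^{24} absorbing 24-sets for A. -/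
/-!
Write `R u x p q` for the statement that `{u, x, p, q}` is an edge, and count ordered pairs, so that the link of `x`
at `u` is a set of pairs in `P × P` of size `d_u(x) ≤ n²`; the degree condition reads
`d_u(v) + d_u(v') > (1 + 2ε) n²` for adjacent `v, v'`.

The absorber. Let `A = {a, b₁, b₂, b₃}`. Take an edge `{a, c₁, c₂, c₃}` and, for each `i`, vertices
`u, u' ∈ Q` and `x, p, q, r, s ∈ P` such that `pq` lies in the links of `bᵢ` and `x` at `u`, and
`rs` lies in the links of `cᵢ` and `x` at `u'`. The `6 + 18` chosen vertices are perfectly matched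
by the edges `u x p q` and `u' cᵢ r s`; together with `A` they are matched by `a c₁ c₂ c₃`,
`u bᵢ p q` and `u' x r s` (`absorbing_of_config`).

Counting. The key point (`good_count`) is that for fixed `u` and `b` more than half of all `x`, in
fact at least `(1/2 + ε/4) n` of them, share at least `ε n²` link pairs with `b`. Let `K` be the set
of neighbours of `b` at `u`. Every `x ∈ K` is good by inclusion-exclusion, so there are at most
`n - |K|` bad `x`. On the other hand each `p ∈ K` has `d(p) > (1 + 2ε) n² - d(b)`, so at most
`|K| (d(b) - 2ε n²)` triples `(x, p, q)` have `pq` in the link of `b` but not in that of `x`, while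
each bad `x` contributes at least `d(b) - ε n²` of them. The two bounds together give at most
`(1/2 - ε/4) n` bad vertices. Hence for any `u, u', b, c` at least `(ε/2) n` vertices `x` are good
for both `(u, b)` and `(u', c)` (`swap_count`). As `a` lies in at least `2ε n³` ordered edges
(`edge_count`), there are at least `ε¹⁰ n²⁴ / 2916` configurations (`config_count`); `O(n²³)` of them
are degenerate, each vertex set arises at most `6! · 18!` times, and `5832 · 6! · 18! ≤ 24!`.
-/

/-- A perfect matching of the subgraph of `H` induced on `WQ ∪ WP`, where `H` is a
`(1,3)`-partite 4-graph encoded as pairs `(u, s)` with `u` in the `Q`-class `Fin m`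
and `s` a 3-subset of the `P`-class `Fin n`. -/
def InducedPM (m n : ℕ) (H : Finset (Fin m × Finset (Fin n)))
    (WQ : Finset (Fin m)) (WP : Finset (Fin n)) : Prop :=
  ∃ M ⊆ H, (∀ p ∈ M, p.1 ∈ WQ ∧ p.2 ⊆ WP) ∧
    (∀ p ∈ M, ∀ r ∈ M, p ≠ r → p.1 ≠ r.1 ∧ Disjoint p.2 r.2) ∧
    (∀ u ∈ WQ, ∃ p ∈ M, p.1 = u) ∧ (∀ v ∈ WP, ∃ p ∈ M, v ∈ p.2)

/-! ### Common links inside one link 3-graph -/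

open Finset in
open Classical in
/-- A neighbour of `v` has at most `n ^ 2` link pairs, so `v` has more than `2 ε n ^ 2`. -/
theorem link_deg_pos {P : Type*} [Fintype P] (ε : ℝ) (R : P → P → P → Prop)
    (hex : ∀ v, ∃ p q, R v p q)
    (hdeg : ∀ v v' q, R v v' q →
      ((univ.filter fun z : P × P => R v z.1 z.2).card : ℝ)
        + (univ.filter fun z : P × P => R v' z.1 z.2).card
        > (1 + 2 * ε) * (Fintype.card P : ℝ) ^ 2) (v : P) :
    ((univ.filter fun z : P × P => R v z.1 z.2).card : ℝ)
      > 2 * ε * (Fintype.card P : ℝ) ^ 2 := by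
  obtain ⟨p, q, h⟩ := hex v
  have h1 := hdeg v p q h
  have h2 : ((univ.filter fun z : P × P => R p z.1 z.2).card : ℝ)
      ≤ (Fintype.card P : ℝ) ^ 2 := by
    have := card_le_univ (univ.filter fun z : P × P => R p z.1 z.2)
    rw [Fintype.card_prod, ← sq] at this
    exact_mod_cast this
  linarith

open Finset in
open Classical in
/-- Here `R` is the link 3-graph of one vertex of `Q`. More than half of all vertices `x` have at
least `ε n ^ 2` link pairs in common with `b`. -/
theorem good_count {P : Type*} [Fintype P] (ε : ℝ) (hε : 0 < ε) (R : P → P → P → Prop)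
    (hsymm : ∀ x p q, R x p q ↔ R p q x)
    (hex : ∀ v, ∃ p q, R v p q)
    (hdeg : ∀ v v' q, R v v' q →
      ((univ.filter fun z : P × P => R v z.1 z.2).card : ℝ)
        + (univ.filter fun z : P × P => R v' z.1 z.2).card
        > (1 + 2 * ε) * (Fintype.card P : ℝ) ^ 2) (b : P) :
    (1 / 2 + ε / 4) * (Fintype.card P : ℝ) ≤
      (univ.filter fun x : P => ε * (Fintype.card P : ℝ) ^ 2 ≤
        ((univ.filter fun z : P × P => R b z.1 z.2 ∧ R x z.1 z.2).card : ℝ)).card := by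
  set n : ℝ := (Fintype.card P : ℝ) with hn
  have hd2 : ∀ v, ((univ.filter fun z : P × P => R v z.1 z.2).card : ℝ) ≤ n ^ 2 := by
    intro v
    have := card_le_univ (univ.filter fun z : P × P => R v z.1 z.2)
    rw [Fintype.card_prod, ← sq] at this
    rw [hn]; exact_mod_cast this
  have hpos := link_deg_pos ε R hex hdeg b
  set D : ℝ := ((univ.filter fun z : P × P => R b z.1 z.2).card : ℝ) with hD
  set K := univ.filter fun p : P => ∃ q, R b p q with hK
  set Bad := univ.filter fun x : P => ¬ (ε * n ^ 2 ≤
        ((univ.filter fun z : P × P => R b z.1 z.2 ∧ R x z.1 z.2).card : ℝ)) with hBad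
  have hsplit : ∀ x, ((univ.filter fun z : P × P => R b z.1 z.2 ∧ R x z.1 z.2).card : ℝ)
      + (univ.filter fun z : P × P => R b z.1 z.2 ∧ ¬ R x z.1 z.2).card = D := by
    intro x
    rw [hD, ← filter_filter, ← filter_filter]
    exact_mod_cast card_filter_add_card_filter_not _
  -- every neighbour of `b` is good, by inclusion-exclusion
  have hKgood : ∀ x ∈ K, x ∉ Bad := by
    intro x hx
    obtain ⟨q, hq⟩ := (mem_filter.1 hx).2
    have h1 := hdeg b x q hq
    have h2 : ((univ.filter fun z : P × P => R b z.1 z.2 ∧ ¬ R x z.1 z.2).card : ℝ)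
        + (univ.filter fun z : P × P => R x z.1 z.2).card ≤ n ^ 2 := by
      have hdisj : Disjoint (univ.filter fun z : P × P => R b z.1 z.2 ∧ ¬ R x z.1 z.2)
          (univ.filter fun z : P × P => R x z.1 z.2) := by
        rw [disjoint_filter]; tauto
      have := card_le_univ ((univ.filter fun z : P × P => R b z.1 z.2 ∧ ¬ R x z.1 z.2) ∪
          (univ.filter fun z : P × P => R x z.1 z.2))
      rw [card_union_of_disjoint hdisj, Fintype.card_prod, ← sq] at this
      rw [hn]; exact_mod_cast this
    have h3 := hsplit x
    simp only [hBad, mem_filter, mem_univ, true_and, not_not]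
    have : 0 ≤ ε * n ^ 2 := by positivity
    linarith
  have hKB : (K.card : ℝ) + Bad.card ≤ n := by
    have hdisj : Disjoint K Bad := Finset.disjoint_left.2 hKgood
    have := card_le_univ (K ∪ Bad)
    rw [card_union_of_disjoint hdisj] at this
    rw [hn]; exact_mod_cast this
  -- double count of the triples `(x, p, q)` with `pq` in the link of `b` but not of `x`
  have hcount : ∑ x : P, ((univ.filter fun z : P × P => R b z.1 z.2 ∧ ¬ R x z.1 z.2).card : ℝ)
      = ∑ p : P, ((univ.filter fun z : P × P => R b p z.1 ∧ ¬ R p z.1 z.2).card : ℝ) := by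
    simp only [card_filter, Nat.cast_sum, Fintype.sum_prod_type]
    rw [sum_comm]
    refine sum_congr rfl fun p _ => ?_
    rw [sum_comm]
    refine sum_congr rfl fun q _ => sum_congr rfl fun x _ => ?_
    simp only [hsymm x p q]
  have hup : ∑ p : P, ((univ.filter fun z : P × P => R b p z.1 ∧ ¬ R p z.1 z.2).card : ℝ)
      ≤ K.card * (D - 2 * ε * n ^ 2) := by
    rw [← sum_subset (subset_univ K), ← nsmul_eq_mul]
    · refine sum_le_card_nsmul _ _ _ fun p hp => ?_
      obtain ⟨q, hq⟩ := (mem_filter.1 hp).2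
      have h1 := hdeg b p q hq
      have h2 : ((univ.filter fun z : P × P => R b p z.1 ∧ ¬ R p z.1 z.2).card : ℝ)
          + (univ.filter fun z : P × P => R p z.1 z.2).card ≤ n ^ 2 := by
        have hdisj : Disjoint (univ.filter fun z : P × P => R b p z.1 ∧ ¬ R p z.1 z.2)
            (univ.filter fun z : P × P => R p z.1 z.2) := by
          rw [disjoint_filter]; tauto
        have := card_le_univ ((univ.filter fun z : P × P => R b p z.1 ∧ ¬ R p z.1 z.2) ∪
            (univ.filter fun z : P × P => R p z.1 z.2))
        rw [card_union_of_disjoint hdisj, Fintype.card_prod, ← sq] at this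
        rw [hn]; exact_mod_cast this
      linarith
    · intro p _ hp
      simp only [hK, mem_filter, mem_univ, true_and, not_exists] at hp
      simp [hp]
  -- a bad `x` misses more than `D - ε n ^ 2` of the link pairs of `b`
  have hlow : Bad.card * (D - ε * n ^ 2) ≤
      ∑ x : P, ((univ.filter fun z : P × P => R b z.1 z.2 ∧ ¬ R x z.1 z.2).card : ℝ) := by
    rw [← nsmul_eq_mul]
    refine le_trans (card_nsmul_le_sum Bad _ _ fun x hx => ?_)
      (sum_le_sum_of_subset_of_nonneg (subset_univ Bad) fun _ _ _ => by positivity)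
    have h1 := hsplit x
    have h2 := (mem_filter.1 hx).2
    linarith
  have hmain : (Bad.card : ℝ) * (D - ε * n ^ 2) ≤ K.card * (D - 2 * ε * n ^ 2) := by
    linarith
  have htot : ((univ.filter fun x : P => ε * n ^ 2 ≤
        ((univ.filter fun z : P × P => R b z.1 z.2 ∧ R x z.1 z.2).card : ℝ)).card : ℝ)
        + Bad.card = n := by
    have := card_filter_add_card_filter_not (s := (univ : Finset P)) fun x : P => ε * n ^ 2 ≤
        ((univ.filter fun z : P × P => R b z.1 z.2 ∧ R x z.1 z.2).card : ℝ)
    rw [card_univ] at this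
    have := congrArg (Nat.cast : ℕ → ℝ) this
    rwa [Nat.cast_add] at this
  have hn0 : 0 < n := by
    rw [hn]; exact_mod_cast Fintype.card_pos_iff.2 ⟨b⟩
  have hDn := hd2 b
  rw [← hD] at hDn
  suffices h : (Bad.card : ℝ) ≤ (1 / 2 - ε / 4) * n by linarith
  by_contra! hcon
  -- `(1/2 - ε/4) (D - ε n ^ 2) < (1/2 + ε/4) (D - 2 ε n ^ 2)` contradicts `D ≤ n ^ 2`
  have hk : (K.card : ℝ) ≤ (1 / 2 + ε / 4) * n := by linarith
  have hεn : 0 < ε * n ^ 2 := by positivity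
  have e1 := mul_le_mul_of_nonneg_right hk (show 0 ≤ D - 2 * ε * n ^ 2 by linarith)
  have e2 := mul_lt_mul_of_pos_right hcon (show 0 < D - ε * n ^ 2 by linarith)
  have e3 : 0 ≤ ε * n * (n ^ 2 - D) := mul_nonneg (by positivity) (by linarith)
  have e4 : 0 < ε ^ 2 * n ^ 3 := by positivity
  nlinarith

/-! ### Counting configurations -/

open Finset in
open Classical in
/-- The tuple `((u, u'), x), ((p, q), (r, s))` exchanges `b` for `c`: it is counted if `pq` lies in
the links of `b` and `x` at `u`, and `rs` in the links of `c` and `x` at `u'`. -/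
theorem swap_count {Q P : Type*} [Fintype Q] [Fintype P] (ε : ℝ) (hε : 0 < ε)
    (R : Q → P → P → P → Prop)
    (hsymm : ∀ u x p q, R u x p q ↔ R u p q x)
    (hex : ∀ u v, ∃ p q, R u v p q)
    (hdeg : ∀ u v v' q, R u v v' q →
      ((univ.filter fun z : P × P => R u v z.1 z.2).card : ℝ)
        + (univ.filter fun z : P × P => R u v' z.1 z.2).card
        > (1 + 2 * ε) * (Fintype.card P : ℝ) ^ 2) (b c : P) :
    (Fintype.card Q : ℝ) ^ 2 * (ε ^ 3 / 2 * (Fintype.card P : ℝ) ^ 5) ≤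
      (univ.filter fun z : ((Q × Q) × P) × ((P × P) × (P × P)) =>
        (R z.1.1.1 b z.2.1.1 z.2.1.2 ∧ R z.1.1.1 z.1.2 z.2.1.1 z.2.1.2) ∧
        (R z.1.1.2 c z.2.2.1 z.2.2.2 ∧ R z.1.1.2 z.1.2 z.2.2.1 z.2.2.2)).card := by
  set n : ℝ := (Fintype.card P : ℝ) with hn
  let F : Q → P → P → ℝ := fun u b x =>
    ((univ.filter fun z : P × P => R u b z.1 z.2 ∧ R u x z.1 z.2).card : ℝ)
  have hcard : ((univ.filter fun z : ((Q × Q) × P) × ((P × P) × (P × P)) =>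
        (R z.1.1.1 b z.2.1.1 z.2.1.2 ∧ R z.1.1.1 z.1.2 z.2.1.1 z.2.1.2) ∧
        (R z.1.1.2 c z.2.2.1 z.2.2.2 ∧ R z.1.1.2 z.1.2 z.2.2.1 z.2.2.2)).card : ℝ)
      = ∑ u : Q × Q, ∑ x : P, F u.1 b x * F u.2 c x := by
    rw [card_filter, Fintype.sum_prod_type, Fintype.sum_prod_type]
    push_cast
    refine sum_congr rfl fun u _ => sum_congr rfl fun x _ => ?_
    simp only [F]
    rw [← Nat.cast_mul, ← card_product, ← filter_product, univ_product_univ, card_filter]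
    push_cast
    rfl
  rw [hcard]
  have hone : ∀ u : Q × Q, ε ^ 3 / 2 * n ^ 5 ≤ ∑ x : P, F u.1 b x * F u.2 c x := by
    intro u
    set X := univ.filter fun x : P => ε * n ^ 2 ≤ F u.1 b x
    set Y := univ.filter fun x : P => ε * n ^ 2 ≤ F u.2 c x
    have hX : (1 / 2 + ε / 4) * n ≤ X.card :=
      good_count ε hε (R u.1) (hsymm _) (hex _) (hdeg _) b
    have hY : (1 / 2 + ε / 4) * n ≤ Y.card :=
      good_count ε hε (R u.2) (hsymm _) (hex _) (hdeg _) c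
    have hXY : (X.card : ℝ) + Y.card ≤ n + (X ∩ Y).card := by
      have h1 := card_union_add_card_inter X Y
      have h2 := card_le_univ (X ∪ Y)
      rw [hn]; exact_mod_cast (by omega : X.card + Y.card ≤ Fintype.card P + (X ∩ Y).card)
    have hI : ε / 2 * n ≤ (X ∩ Y).card := by linarith
    calc ε ^ 3 / 2 * n ^ 5 = ε / 2 * n * (ε * n ^ 2 * (ε * n ^ 2)) := by ring
      _ ≤ (X ∩ Y).card * (ε * n ^ 2 * (ε * n ^ 2)) := by gcongr
      _ ≤ ∑ x ∈ X ∩ Y, F u.1 b x * F u.2 c x := by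
        rw [← nsmul_eq_mul]
        refine card_nsmul_le_sum _ _ _ fun x hx => ?_
        have hx := mem_inter.1 hx
        have h1 := (mem_filter.1 hx.1).2
        have h2 := (mem_filter.1 hx.2).2
        gcongr
      _ ≤ _ := sum_le_sum_of_subset_of_nonneg (subset_univ _) fun _ _ _ => by
        simp only [F]; positivity
  have := card_nsmul_le_sum (univ : Finset (Q × Q)) _ _ fun u _ => hone u
  rwa [card_univ, Fintype.card_prod, nsmul_eq_mul, Nat.cast_mul, ← sq] at this

open Finset in
open Classical in
theorem edge_count {P : Type*} [Fintype P] (ε : ℝ) (R : P → P → P → Prop)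
    (hex : ∀ v, ∃ p q, R v p q)
    (hdeg : ∀ v v' q, R v v' q →
      ((univ.filter fun z : P × P => R v z.1 z.2).card : ℝ)
        + (univ.filter fun z : P × P => R v' z.1 z.2).card
        > (1 + 2 * ε) * (Fintype.card P : ℝ) ^ 2) :
    2 * ε * (Fintype.card P : ℝ) ^ 3 ≤
      (univ.filter fun c : Fin 3 → P => R (c 0) (c 1) (c 2)).card := by
  have h1 : (univ.filter fun z : P × (P × P) => R z.1 z.2.1 z.2.2).card ≤
      (univ.filter fun c : Fin 3 → P => R (c 0) (c 1) (c 2)).card := by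
    refine card_le_card_of_injOn (fun z => ![z.1, z.2.1, z.2.2]) (fun z hz => ?_)
      fun z _ w _ h => ?_
    · simpa using hz
    · have e0 := congrFun h 0
      have e1 := congrFun h 1
      have e2 := congrFun h 2
      simp at e0 e1 e2
      exact Prod.ext e0 (Prod.ext e1 e2)
  refine le_trans ?_ (Nat.cast_le.2 h1)
  rw [card_filter, Fintype.sum_prod_type]
  simp only [← card_filter]
  push_cast
  have := card_nsmul_le_sum (univ : Finset P) _ _
    fun v _ => (link_deg_pos ε R hex hdeg v).le
  rw [card_univ, nsmul_eq_mul] at this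
  refine le_trans (le_of_eq (by ring)) this

/-- The configurations `(f, g)` counted for the absorber. Block `i` consists of the `Q`-vertices
`f (i, 0)`, `f (i, 1)` and the `P`-vertices `c = g (i, 0)`, `x = g (i, 1)`,
`p, q = g (i, 2), g (i, 3)` and `r, s = g (i, 4), g (i, 5)`. The pair `pq` lies in the links of
`b i` and `x` at `f (i, 0)`, the pair `rs` lies in the links of `c` and `x` at `f (i, 1)`, and the
three vertices `g (i, 0)` form an edge with `a`. No distinctness is imposed. -/
def IsConfig {Q P : Type*} (R : Q → P → P → P → Prop) (a : Q) (b : Fin 3 → P)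
    (z : (Fin 3 × Fin 2 → Q) × (Fin 3 × Fin 6 → P)) : Prop :=
  R a (z.2 (0, 0)) (z.2 (1, 0)) (z.2 (2, 0)) ∧ ∀ i,
    (R (z.1 (i, 0)) (b i) (z.2 (i, 2)) (z.2 (i, 3)) ∧
      R (z.1 (i, 0)) (z.2 (i, 1)) (z.2 (i, 2)) (z.2 (i, 3))) ∧
    (R (z.1 (i, 1)) (z.2 (i, 0)) (z.2 (i, 4)) (z.2 (i, 5)) ∧
      R (z.1 (i, 1)) (z.2 (i, 1)) (z.2 (i, 4)) (z.2 (i, 5)))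

open Finset in
open Classical in
theorem config_count {Q P : Type*} [Fintype Q] [Fintype P] (ε : ℝ) (hε : 0 < ε)
    (R : Q → P → P → P → Prop)
    (hsymm : ∀ u x p q, R u x p q ↔ R u p q x)
    (hex : ∀ u v, ∃ p q, R u v p q)
    (hdeg : ∀ u v v' q, R u v v' q →
      ((univ.filter fun z : P × P => R u v z.1 z.2).card : ℝ)
        + (univ.filter fun z : P × P => R u v' z.1 z.2).card
        > (1 + 2 * ε) * (Fintype.card P : ℝ) ^ 2) (a : Q) (b : Fin 3 → P) :
    2 * ε * (Fintype.card P : ℝ) ^ 3 *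
      ((Fintype.card Q : ℝ) ^ 2 * (ε ^ 3 / 2 * (Fintype.card P : ℝ) ^ 5)) ^ 3 ≤
      (univ.filter (IsConfig R a b)).card := by
  set E := univ.filter fun c : Fin 3 → P => R a (c 0) (c 1) (c 2) with hE
  let W : P → P → Finset (((Q × Q) × P) × ((P × P) × (P × P))) := fun b c =>
    univ.filter fun z => (R z.1.1.1 b z.2.1.1 z.2.1.2 ∧ R z.1.1.1 z.1.2 z.2.1.1 z.2.1.2) ∧
        (R z.1.1.2 c z.2.2.1 z.2.2.2 ∧ R z.1.1.2 z.1.2 z.2.2.1 z.2.2.2)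
  let S := E.sigma fun c => Fintype.piFinset fun i => W (b i) (c i)
  have hS : 2 * ε * (Fintype.card P : ℝ) ^ 3 *
      ((Fintype.card Q : ℝ) ^ 2 * (ε ^ 3 / 2 * (Fintype.card P : ℝ) ^ 5)) ^ 3 ≤ S.card := by
    simp only [S]
    rw [card_sigma]
    push_cast
    refine le_trans (mul_le_mul_of_nonneg_right (edge_count ε (R a) (hex a) (hdeg a))
      (by positivity)) ?_
    rw [← nsmul_eq_mul]
    refine card_nsmul_le_sum _ _ _ fun c _ => ?_
    rw [Fintype.card_piFinset, Nat.cast_prod, ← Fin.prod_const]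
    exact prod_le_prod (fun _ _ => by positivity)
      fun i _ => swap_count ε hε R hsymm hex hdeg (b i) (c i)
  refine hS.trans (Nat.cast_le.2 ?_)
  refine card_le_card_of_injOn (fun y =>
    (fun j => ![(y.2 j.1).1.1.1, (y.2 j.1).1.1.2] j.2,
     fun k => ![y.1 k.1, (y.2 k.1).1.2, (y.2 k.1).2.1.1, (y.2 k.1).2.1.2,
      (y.2 k.1).2.2.1, (y.2 k.1).2.2.2] k.2)) ?_ ?_
  · rintro ⟨c, s⟩ hy
    simp only [S, coe_sigma, Set.mem_sigma_iff, mem_coe, Fintype.mem_piFinset, hE, W,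
      mem_filter, mem_univ, true_and] at hy
    simp only [coe_filter, mem_univ, true_and, Set.mem_ofPred_eq, IsConfig]
    exact hy
  · rintro ⟨c, s⟩ _ ⟨c', s'⟩ _ h
    have hf := congrArg Prod.fst h
    have hg := congrArg Prod.snd h
    have f0 := fun i => congrFun hf (i, 0)
    have f1 := fun i => congrFun hf (i, 1)
    have g0 := fun i => congrFun hg (i, 0)
    have g1 := fun i => congrFun hg (i, 1)
    have g2 := fun i => congrFun hg (i, 2)
    have g3 := fun i => congrFun hg (i, 3)
    have g4 := fun i => congrFun hg (i, 4)
    have g5 := fun i => congrFun hg (i, 5)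
    simp at f0 f1 g0 g1 g2 g3 g4 g5
    have hc : c = c' := funext g0
    subst hc
    have hs : s = s' := funext fun i => by
      ext <;> simp [f0, f1, g1, g2, g3, g4, g5]
    rw [hs]

/-! ### Functions with repetitions and enumerations of a set -/

open Finset in
open Classical in
/-- A family of functions in which each member is determined by its values off `i` has at most
`|α| ^ (|ι| - 1)` members. -/
theorem card_determined_le {ι α : Type*} [Fintype ι] [Fintype α] (i : ι) (S : Finset (ι → α))
    (h : ∀ f ∈ S, ∀ g ∈ S, (∀ k, k ≠ i → f k = g k) → f i = g i) :
    S.card ≤ Fintype.card α ^ (Fintype.card ι - 1) := by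
  have h1 : S.card ≤ (univ : Finset ({k : ι // k ≠ i} → α)).card := by
    refine card_le_card_of_injOn (fun f k => f k.1) (fun _ _ => mem_coe.2 (mem_univ _)) ?_
    intro f hf g hg hfg
    have hk : ∀ k, k ≠ i → f k = g k := fun k hk => congrFun hfg ⟨k, hk⟩
    funext k
    by_cases hki : k = i
    · subst hki; exact h f hf g hg hk
    · exact hk k hki
  rw [card_univ, Fintype.card_fun] at h1
  rwa [Fintype.card_subtype_compl, Fintype.card_subtype_eq] at h1

open Finset in
open Classical in
/-- The functions that are not injective or take a value in `B` are a lower-order fraction of all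
functions. -/
theorem card_bad_le {ι α : Type*} [Fintype ι] [DecidableEq ι] [Fintype α] (B : Finset α) :
    (univ.filter fun f : ι → α => ¬ (Function.Injective f ∧ ∀ i, f i ∉ B)).card ≤
      (Fintype.card ι ^ 2 + Fintype.card ι * B.card) *
        Fintype.card α ^ (Fintype.card ι - 1) := by
  have hsub : (univ.filter fun f : ι → α => ¬ (Function.Injective f ∧ ∀ i, f i ∉ B)) ⊆
      ((univ.filter fun z : ι × ι => z.1 ≠ z.2).biUnion fun z =>
        univ.filter fun f : ι → α => f z.1 = f z.2) ∪
      ((univ ×ˢ B : Finset (ι × α)).biUnion fun z => univ.filter fun f : ι → α => f z.1 = z.2) := by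
    intro f hf
    have hf := (mem_filter.1 hf).2
    simp only [mem_union, mem_biUnion, mem_filter, mem_univ, true_and, mem_product]
    by_cases hinj : Function.Injective f
    · right
      have : ¬ ∀ i, f i ∉ B := fun h => hf ⟨hinj, h⟩
      push Not at this
      obtain ⟨i, hi⟩ := this
      exact ⟨(i, f i), hi, rfl⟩
    · left
      simp only [Function.Injective] at hinj
      push Not at hinj
      obtain ⟨i, j, h1, h2⟩ := hinj
      exact ⟨(i, j), h2, h1⟩
  refine (card_le_card hsub).trans ((card_union_le _ _).trans ?_)
  rw [add_mul]
  refine add_le_add ?_ ?_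
  · refine (card_biUnion_le_card_mul _ _ (Fintype.card α ^ (Fintype.card ι - 1)) ?_).trans ?_
    · intro z hz
      refine card_determined_le z.1 _ fun f hf g hg hk => ?_
      rw [(mem_filter.1 hf).2, (mem_filter.1 hg).2, hk _ (Ne.symm (mem_filter.1 hz).2)]
    · gcongr
      refine (card_le_univ _).trans ?_
      rw [Fintype.card_prod, sq]
  · refine (card_biUnion_le_card_mul _ _ (Fintype.card α ^ (Fintype.card ι - 1)) ?_).trans ?_
    · intro z hz
      refine card_determined_le z.1 _ fun f hf g hg hk => ?_
      rw [(mem_filter.1 hf).2, (mem_filter.1 hg).2]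
    · rw [card_product, card_univ]

open Finset in
open Classical in
/-- An injective enumeration of a fixed set can be chosen in at most `|ι|!` ways. -/
theorem card_enum_le {ι α : Type*} [Fintype ι] [DecidableEq ι] [Fintype α] (T : Finset α) :
    (univ.filter fun f : ι → α => Function.Injective f ∧ univ.image f = T).card ≤
      (Fintype.card ι).factorial := by
  by_cases hT : T.card = Fintype.card ι
  · have h1 : (univ.filter fun f : ι → α => Function.Injective f ∧ univ.image f = T).card ≤
        ((univ : Finset (ι ↪ T)).image fun e i => (e i : α)).card := by
      refine card_le_card fun f hf => ?_
      obtain ⟨hinj, him⟩ := (mem_filter.1 hf).2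
      refine mem_image.2 ⟨⟨fun i => ⟨f i, him ▸ mem_image_of_mem f (mem_univ i)⟩,
        fun i j h => hinj (congrArg Subtype.val h)⟩, mem_univ _, rfl⟩
    refine h1.trans (card_image_le.trans ?_)
    rw [card_univ, Fintype.card_embedding_eq, Fintype.card_coe, hT, Nat.descFactorial_self]
  · rw [filter_eq_empty_iff.2]
    · simp
    · rintro f - ⟨hinj, him⟩
      exact hT (by rw [← him, card_image_of_injective _ hinj, card_univ])

/-! ### Perfect matchings from a configuration -/

open Finset in
/-- Edges indexed by `ι`, with distinct `Q`-vertices `q i` and all `P`-vertices `h (i, j)` distinct,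
form a perfect matching of the set of vertices they use. -/
theorem inducedPM_of_family {m n : ℕ} {H : Finset (Fin m × Finset (Fin n))} {ι : Type*}
    [Fintype ι] (q : ι → Fin m) (h : ι × Fin 3 → Fin n)
    (hq : Function.Injective q) (hh : Function.Injective h)
    (hH : ∀ i, (q i, {h (i, 0), h (i, 1), h (i, 2)}) ∈ H) :
    InducedPM m n H (univ.image q) (univ.image h) := by
  classical
  refine ⟨univ.image fun i => (q i, {h (i, 0), h (i, 1), h (i, 2)}), ?_, ?_, ?_, ?_, ?_⟩
  · intro p hp
    obtain ⟨i, -, rfl⟩ := mem_image.1 hp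
    exact hH i
  · intro p hp
    obtain ⟨i, -, rfl⟩ := mem_image.1 hp
    refine ⟨mem_image_of_mem _ (mem_univ _), ?_⟩
    intro v hv
    simp only [mem_insert, mem_singleton] at hv
    rcases hv with rfl | rfl | rfl <;> exact mem_image_of_mem _ (mem_univ _)
  · intro p hp r hr hpr
    obtain ⟨i, -, rfl⟩ := mem_image.1 hp
    obtain ⟨j, -, rfl⟩ := mem_image.1 hr
    have hij : i ≠ j := by rintro rfl; exact hpr rfl
    refine ⟨fun e => hij (hq e), ?_⟩
    have hne : ∀ k l : Fin 3, h (i, k) ≠ h (j, l) :=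
      fun k l e => hij (congrArg Prod.fst (hh e))
    have hne' := fun k l => (hne k l).symm
    simp [hne']
  · intro u hu
    obtain ⟨i, -, rfl⟩ := mem_image.1 hu
    exact ⟨_, mem_image_of_mem _ (mem_univ i), rfl⟩
  · intro v hv
    obtain ⟨⟨i, k⟩, -, rfl⟩ := mem_image.1 hv
    refine ⟨_, mem_image_of_mem _ (mem_univ i), ?_⟩
    fin_cases k <;> simp

/-- Positions of the `P`-vertices in the edges covering `T` alone: at `f (i, 0)` the vertex `x` is
matched with `pq`, at `f (i, 1)` the vertex `c` is matched with `rs`. -/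
def innerPos (t : (Fin 3 × Fin 2) × Fin 3) : Fin 3 × Fin 6 :=
  (t.1.1, (![![1, 2, 3], ![0, 4, 5]] : Fin 2 → Fin 3 → Fin 6) t.1.2 t.2)

/-- Positions of the `P`-vertices in the edges covering `A ∪ T`, where position `(i, 6)` stands
for `b i`: the index `none` is the edge formed by `a` and the three vertices `c`; at `f (i, 0)` the
vertex `b i` is matched with `pq`, at `f (i, 1)` the vertex `x` is matched with `rs`. -/
def outerPos (t : Option (Fin 3 × Fin 2) × Fin 3) : Fin 3 × Fin 7 :=
  match t.1 with
  | none => (t.2, 0)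
  | some s => (s.1, (![![6, 2, 3], ![1, 4, 5]] : Fin 2 → Fin 3 → Fin 7) s.2 t.2)

theorem innerPos_bijective : Function.Bijective innerPos := by
  rw [Fintype.bijective_iff_injective_and_card]
  exact ⟨by unfold Function.Injective; decide, by decide⟩

theorem outerPos_bijective : Function.Bijective outerPos := by
  rw [Fintype.bijective_iff_injective_and_card]
  exact ⟨by unfold Function.Injective; decide, by decide⟩

open Finset in
theorem absorbing_of_config {m n : ℕ} {H : Finset (Fin m × Finset (Fin n))}
    (a : Fin m) (b : Fin 3 → Fin n) (hb : Function.Injective b)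
    (z : (Fin 3 × Fin 2 → Fin m) × (Fin 3 × Fin 6 → Fin n))
    (hz : IsConfig (fun u x p q => (u, ({x, p, q} : Finset (Fin n))) ∈ H) a b z)
    (hf : Function.Injective z.1) (hfa : ∀ i, z.1 i ≠ a)
    (hg : Function.Injective z.2) (hgb : ∀ k, z.2 k ∉ univ.image b) :
    (univ.image z.1).card + (univ.image z.2).card = 24 ∧
      InducedPM m n H (univ.image z.1) (univ.image z.2) ∧
      InducedPM m n H (insert a (univ.image z.1)) (univ.image b ∪ univ.image z.2) := by
  obtain ⟨f, g⟩ := z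
  obtain ⟨hE, hS⟩ := hz
  dsimp only at *
  refine ⟨?_, ?_, ?_⟩
  · rw [card_image_of_injective _ hf, card_image_of_injective _ hg]
    decide
  · have := inducedPM_of_family (H := H) f (g ∘ innerPos) hf (hg.comp innerPos_bijective.1) ?_
    · rwa [← image_image, image_univ_of_surjective innerPos_bijective.2] at this
    · rintro ⟨i, j⟩
      fin_cases j
      · exact (hS i).1.2
      · exact (hS i).2.1
  · let q : Option (Fin 3 × Fin 2) → Fin m := fun o => o.elim a f
    let g' : Fin 3 × Fin 7 → Fin n := fun k =>
      Fin.lastCases (motive := fun _ => Fin n) (b k.1) (fun j => g (k.1, j)) k.2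
    have g'l : ∀ i, g' (i, Fin.last 6) = b i := fun i => by simp only [g', Fin.lastCases_last]
    have g'c : ∀ i (j : Fin 6), g' (i, j.castSucc) = g (i, j) := fun i j => by
      simp only [g', Fin.lastCases_castSucc]
    have hq : Function.Injective q := by
      rintro (_ | i) (_ | j) h
      · rfl
      · exact absurd h.symm (hfa j)
      · exact absurd h (hfa i)
      · exact congrArg some (hf h)
    have hg' : Function.Injective g' := by
      rintro ⟨i, k⟩ ⟨j, l⟩ h
      induction k using Fin.lastCases with
      | last =>
        induction l using Fin.lastCases with
        | last => rw [g'l, g'l] at h; rw [hb h]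
        | cast l =>
          rw [g'l, g'c] at h
          exact absurd (h ▸ mem_image_of_mem b (mem_univ i)) (hgb (j, l))
      | cast k =>
        induction l using Fin.lastCases with
        | last =>
          rw [g'l, g'c] at h
          exact absurd (h ▸ mem_image_of_mem b (mem_univ j)) (hgb (i, k))
        | cast l =>
          rw [g'c, g'c] at h
          have := hg h
          simp only [Prod.mk.injEq] at this
          rw [this.1, this.2]
    have := inducedPM_of_family (H := H) q (g' ∘ outerPos) hq (hg'.comp outerPos_bijective.1) ?_
    · rw [← image_image, image_univ_of_surjective outerPos_bijective.2] at this
      have hQ : univ.image q = insert a (univ.image f) := by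
        ext u
        simp [q, Option.exists, eq_comm]
      have hP : univ.image g' = univ.image b ∪ univ.image g := by
        ext v
        simp only [mem_image, mem_univ, true_and, mem_union]
        constructor
        · rintro ⟨⟨i, k⟩, rfl⟩
          induction k using Fin.lastCases with
          | last => exact Or.inl ⟨i, (g'l i).symm⟩
          | cast k => exact Or.inr ⟨(i, k), (g'c i k).symm⟩
        · rintro (⟨i, rfl⟩ | ⟨⟨i, k⟩, rfl⟩)
          · exact ⟨_, g'l i⟩
          · exact ⟨_, g'c i k⟩
      rwa [hQ, hP] at this
    · rintro (_ | ⟨i, j⟩)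
      · exact hE
      · fin_cases j
        · exact (hS i).1.1
        · exact (hS i).2.2

/-! ### Counting absorbing sets -/

open Finset in
open Classical in
/-- Every edge at `u` through `v` gives two ordered pairs in the link of `v` at `u`. -/
theorem two_mul_deg_le {m n : ℕ} (H : Finset (Fin m × Finset (Fin n)))
    (h3 : ∀ p ∈ H, p.2.card = 3) (R : Fin m → Fin n → Fin n → Fin n → Prop)
    (hR : ∀ u x p q, R u x p q ↔ (u, ({x, p, q} : Finset (Fin n))) ∈ H)
    (u : Fin m) (v : Fin n) :
    2 * (H.filter (fun p => p.1 = u ∧ v ∈ p.2)).card ≤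
      (univ.filter fun z : Fin n × Fin n => R u v z.1 z.2).card := by
  set Z := univ.filter fun z : Fin n × Fin n => R u v z.1 z.2
  have hmaps : ∀ z ∈ Z, (u, ({v, z.1, z.2} : Finset (Fin n))) ∈
      H.filter (fun p => p.1 = u ∧ v ∈ p.2) := by
    intro z hz
    exact mem_filter.2 ⟨(hR _ _ _ _).1 (mem_filter.1 hz).2, rfl, by simp⟩
  rw [card_eq_sum_card_fiberwise hmaps, mul_comm, ← smul_eq_mul]
  refine card_nsmul_le_sum _ _ _ ?_
  rintro ⟨u', s⟩ hp
  obtain ⟨hpH, rfl, hv⟩ := mem_filter.1 hp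
  dsimp only at hv hpH ⊢
  have hs := h3 _ hpH
  dsimp only at hs
  have hcard : (s.erase v).card = 2 := by rw [card_erase_of_mem hv, hs]
  obtain ⟨p, q, hpq, he⟩ := card_eq_two.1 hcard
  have hsv : s = {v, p, q} := by rw [← insert_erase hv, he]
  have hsv' : s = {v, q, p} := by rw [hsv, pair_comm]
  have hsub : ({(p, q), (q, p)} : Finset (Fin n × Fin n)) ⊆
      Z.filter fun z => (u', ({v, z.1, z.2} : Finset (Fin n))) = (u', s) := by
    intro z hz
    simp only [mem_insert, mem_singleton] at hz
    rcases hz with rfl | rfl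
    · refine mem_filter.2 ⟨mem_filter.2 ⟨mem_univ _, (hR _ _ _ _).2 ?_⟩, ?_⟩ <;> rw [← hsv]
      exact hpH
    · refine mem_filter.2 ⟨mem_filter.2 ⟨mem_univ _, (hR _ _ _ _).2 ?_⟩, ?_⟩ <;> rw [← hsv']
      exact hpH
  refine le_trans (le_of_eq ?_) (card_le_card hsub)
  rw [card_pair]
  simp [hpq]

open Finset in
open Classical in
/-- For `n` large the configurations with repeated vertices, or meeting `a` or `b`, are
negligible, and each vertex set carries at most `6! · 18!` configurations. -/
theorem config_sets_count {Q P : Type*} [Fintype Q] [Fintype P] (ε : ℝ) (hε : 0 < ε)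
    (R : Q → P → P → P → Prop)
    (hsymm : ∀ u x p q, R u x p q ↔ R u p q x)
    (hex : ∀ u v, ∃ p q, R u v p q)
    (hdeg : ∀ u v v' q, R u v v' q →
      ((univ.filter fun z : P × P => R u v z.1 z.2).card : ℝ)
        + (univ.filter fun z : P × P => R u v' z.1 z.2).card
        > (1 + 2 * ε) * (Fintype.card P : ℝ) ^ 2)
    (hQP : 3 * Fintype.card Q = Fintype.card P)
    (hlarge : 420 * 5832 / ε ^ 10 ≤ (Fintype.card P : ℝ)) (a : Q) (b : Fin 3 → P) :
    ε ^ 10 / 5832 * (Fintype.card P : ℝ) ^ 24 ≤ ((Nat.factorial 6 * Nat.factorial 18 : ℕ) : ℝ) *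
      (Set.ncard {T : Finset Q × Finset P | ∃ z, IsConfig R a b z ∧
        (Function.Injective z.1 ∧ ∀ i, z.1 i ≠ a) ∧
        (Function.Injective z.2 ∧ ∀ k i, z.2 k ≠ b i) ∧
        (T.1 : Set Q) = Set.range z.1 ∧ (T.2 : Set P) = Set.range z.2} : ℝ) := by
  have hq : (Fintype.card Q : ℝ) = (Fintype.card P : ℝ) / 3 := by
    rw [← hQP]; push_cast; ring
  have hC := config_count ε hε R hsymm hex hdeg a b
  rw [hq] at hC
  have hqn : Fintype.card Q ≤ Fintype.card P := by omega
  generalize hn : Fintype.card P = n at *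
  set C := univ.filter (IsConfig R a b)
  set BQ := univ.filter fun f : Fin 3 × Fin 2 → Q =>
    ¬ (Function.Injective f ∧ ∀ i, f i ∉ ({a} : Finset Q)) with hBQ
  set BP := univ.filter fun g : Fin 3 × Fin 6 → P =>
    ¬ (Function.Injective g ∧ ∀ i, g i ∉ univ.image b) with hBP
  have hBQc : BQ.card ≤ 42 * n ^ 5 := by
    have := card_bad_le (ι := Fin 3 × Fin 2) ({a} : Finset Q)
    simp only [Fintype.card_prod, Fintype.card_fin, card_singleton] at this
    refine this.trans ?_
    norm_num
    exact Nat.pow_le_pow_left hqn 5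
  have hBPc : BP.card ≤ 378 * n ^ 17 := by
    have := card_bad_le (ι := Fin 3 × Fin 6) (univ.image b)
    simp only [Fintype.card_prod, Fintype.card_fin, hn] at this
    refine this.trans ?_
    have hb3 : (univ.image b).card ≤ 3 := card_image_le.trans (by simp)
    norm_num
    gcongr
    omega
  set G := C.filter fun z => z.1 ∉ BQ ∧ z.2 ∉ BP with hG
  have hCG : C.card ≤ G.card + 420 * n ^ 23 := by
    have hsub : C ⊆ G ∪ (BQ ×ˢ univ ∪ univ ×ˢ BP) := by
      intro z hz
      simp only [hG, mem_union, mem_filter, mem_product, mem_univ, and_true, true_and]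
      tauto
    have h1 := (card_le_card hsub).trans ((card_union_le _ _).trans
      (add_le_add_right (card_union_le _ _) _))
    rw [card_product, card_product, card_univ, card_univ,
      Fintype.card_fun, Fintype.card_fun, Fintype.card_prod, Fintype.card_prod, Fintype.card_fin,
      Fintype.card_fin, Fintype.card_fin, hn] at h1
    have h2 : BQ.card * n ^ (3 * 6) ≤ 42 * n ^ 5 * n ^ 18 := Nat.mul_le_mul_right _ hBQc
    have h3 : Fintype.card Q ^ (3 * 2) * BP.card ≤ n ^ 6 * (378 * n ^ 17) :=
      Nat.mul_le_mul (Nat.pow_le_pow_left hqn 6) hBPc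
    have h4 : 42 * n ^ 5 * n ^ 18 + n ^ 6 * (378 * n ^ 17) = 420 * n ^ 23 := by ring
    omega
  have hGlow : ε ^ 10 / 5832 * (n : ℝ) ^ 24 ≤ G.card := by
    have h1 : (C.card : ℝ) ≤ G.card + 420 * (n : ℝ) ^ 23 := by exact_mod_cast hCG
    have h2 : 420 * (n : ℝ) ^ 23 ≤ ε ^ 10 / 5832 * (n : ℝ) ^ 24 := by
      rw [div_le_iff₀ (by positivity)] at hlarge
      have : 420 ≤ ε ^ 10 / 5832 * n := by linarith
      calc 420 * (n : ℝ) ^ 23 ≤ ε ^ 10 / 5832 * n * (n : ℝ) ^ 23 := by gcongr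
        _ = _ := by ring
    have h3 : 2 * ε * (n : ℝ) ^ 3 * (((n : ℝ) / 3) ^ 2 * (ε ^ 3 / 2 * (n : ℝ) ^ 5)) ^ 3 =
        2 * (ε ^ 10 / 5832 * (n : ℝ) ^ 24) := by ring
    linarith
  let φ : (Fin 3 × Fin 2 → Q) × (Fin 3 × Fin 6 → P) →
      Finset Q × Finset P :=
    fun z => (univ.image z.1, univ.image z.2)
  have hGinj : ∀ z ∈ G, (Function.Injective z.1 ∧ ∀ i, z.1 i ≠ a) ∧
      (Function.Injective z.2 ∧ ∀ i, z.2 i ∉ univ.image b) := by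
    intro z hz
    have := (mem_filter.1 hz).2
    simpa only [hBQ, hBP, mem_filter, mem_univ, true_and, not_not,
      mem_singleton, ← ne_eq] using this
  have hfib : G.card ≤ (Nat.factorial 6 * Nat.factorial 18) * (G.image φ).card := by
    refine Finset.card_le_mul_card_image G _ fun T _ => ?_
    have hsub : G.filter (fun z => φ z = T) ⊆
        (univ.filter fun f : Fin 3 × Fin 2 → Q =>
          Function.Injective f ∧ univ.image f = T.1) ×ˢ
        (univ.filter fun g : Fin 3 × Fin 6 → P =>
          Function.Injective g ∧ univ.image g = T.2) := by
      intro z hz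
      obtain ⟨hzG, hzT⟩ := mem_filter.1 hz
      have h := hGinj z hzG
      refine mem_product.2 ⟨mem_filter.2 ⟨mem_univ _, h.1.1, ?_⟩,
        mem_filter.2 ⟨mem_univ _, h.2.1, ?_⟩⟩
      · rw [← hzT]
      · rw [← hzT]
    refine (card_le_card hsub).trans ?_
    rw [card_product]
    have h1 := card_enum_le (ι := Fin 3 × Fin 2) T.1
    have h2 := card_enum_le (ι := Fin 3 × Fin 6) T.2
    rw [Fintype.card_prod, Fintype.card_fin, Fintype.card_fin] at h1 h2
    rw [show 3 * 2 = 6 from rfl] at h1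
    rw [show 3 * 6 = 18 from rfl] at h2
    exact Nat.mul_le_mul h1 h2
  refine hGlow.trans ?_
  rw [← Nat.cast_mul]
  refine Nat.cast_le.2 (hfib.trans (Nat.mul_le_mul_left _ ?_))
  rw [← Set.ncard_coe_finset]
  refine Set.ncard_le_ncard ?_ (Set.toFinite _)
  intro T hT
  obtain ⟨z, hz, rfl⟩ := mem_image.1 (mem_coe.1 hT)
  have h := hGinj z hz
  refine ⟨z, (mem_filter.1 (mem_filter.1 hz).1).2, h.1, ⟨h.2.1, fun k i e => ?_⟩, ?_, ?_⟩
  · exact h.2.2 k (e ▸ mem_image_of_mem b (mem_univ i))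
  · simp [φ]
  · simp [φ]

/-- For `0 < ε ≪ 1` and `n` large, divisible by 3: if `H` is a
`(1,3)`-partite 4-graph with classes `Q = Fin (n/3)`, `P = Fin n`, every vertex
of `Q` adjacent to every vertex of `P`, and degree-sum condition `(1/2 + ε)n²`,
then every set `A` with `|A ∩ Q| = 1` (the vertex `a`) and `|A ∩ P| = 3`
(the set `B`) has at least `(ε^{23/2}/(24!·2^{37/2}))·n²⁴` absorbing 24-sets,
i.e. 24-element vertex sets `T = (T₁, T₂)` such that both `H[T]` and `H[A ∪ T]`
have perfect matchings. -/
theorem stmt_7 :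
    ∀ ε : ℝ, 0 < ε → ε < 1 →
    ∃ n₀ : ℕ, ∀ n : ℕ, n₀ ≤ n → 3 ∣ n →
    ∀ H : Finset (Fin (n / 3) × Finset (Fin n)),
      (∀ p ∈ H, p.2.card = 3) →
      (∀ u : Fin (n / 3), ∀ v : Fin n, ∃ p ∈ H, p.1 = u ∧ v ∈ p.2) →
      (∀ u : Fin (n / 3), ∀ v v' : Fin n, v ≠ v' →
        0 < (H.filter (fun p => p.1 = u ∧ v ∈ p.2 ∧ v' ∈ p.2)).card →
        (((H.filter (fun p => p.1 = u ∧ v ∈ p.2)).card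
          + (H.filter (fun p => p.1 = u ∧ v' ∈ p.2)).card : ℝ)
            > (1 / 2 + ε) * (n : ℝ) ^ 2)) →
      ∀ a : Fin (n / 3), ∀ B : Finset (Fin n), B.card = 3 →
        (({T : Finset (Fin (n / 3)) × Finset (Fin n) |
              T.1.card + T.2.card = 24 ∧
              InducedPM (n / 3) n H T.1 T.2 ∧
              InducedPM (n / 3) n H (insert a T.1) (B ∪ T.2)}.ncard : ℝ)
          ≥ ε ^ ((23 : ℝ) / 2) / ((Nat.factorial 24 : ℝ) * (2 : ℝ) ^ ((37 : ℝ) / 2))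
              * (n : ℝ) ^ 24) := by
  classical
  intro ε hε hε1
  refine ⟨⌈420 * 5832 / ε ^ 10⌉₊ + 1, ?_⟩
  intro n hn hn3 H h3 hadj hdeg a B hB
  have hnr : 420 * 5832 / ε ^ 10 ≤ (n : ℝ) :=
    (Nat.le_ceil _).trans (by exact_mod_cast (Nat.le_succ _).trans hn)
  -- `R` is kept opaque so that all filters over it use the same decidability instance
  obtain ⟨R, hR⟩ : ∃ R : Fin (n / 3) → Fin n → Fin n → Fin n → Prop,
      ∀ u x p q, R u x p q ↔ (u, ({x, p, q} : Finset (Fin n))) ∈ H :=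
    ⟨fun u x p q => (u, ({x, p, q} : Finset (Fin n))) ∈ H, fun _ _ _ _ => Iff.rfl⟩
  have hsymm : ∀ u x p q, R u x p q ↔ R u p q x := by
    intro u x p q
    have : ({x, p, q} : Finset (Fin n)) = {p, q, x} := by
      ext; simp only [Finset.mem_insert, Finset.mem_singleton]; tauto
    simp only [hR, this]
  have hex : ∀ u v, ∃ p q, R u v p q := by
    intro u v
    obtain ⟨⟨u', s⟩, hpH, rfl, hv⟩ := hadj u v
    dsimp only at hv
    have hs := h3 _ hpH
    have hcard : (s.erase v).card = 2 := by rw [Finset.card_erase_of_mem hv, hs]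
    obtain ⟨p, q, -, he⟩ := Finset.card_eq_two.1 hcard
    refine ⟨p, q, ?_⟩
    rw [hR]
    rwa [← he, Finset.insert_erase hv]
  have hdeg' : ∀ u v v' q, R u v v' q →
      ((Finset.univ.filter fun z : Fin n × Fin n => R u v z.1 z.2).card : ℝ)
        + (Finset.univ.filter fun z : Fin n × Fin n => R u v' z.1 z.2).card
        > (1 + 2 * ε) * (Fintype.card (Fin n) : ℝ) ^ 2 := by
    intro u v v' q h
    rw [hR] at h
    have hne : v ≠ v' := by
      rintro rfl
      have h1 := h3 _ h
      have h2 := Finset.card_le_two (a := v) (b := q)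
      simp only [Finset.insert_idem] at h1
      omega
    have h1 := hdeg u v v' hne (Finset.card_pos.2 ⟨_, Finset.mem_filter.2 ⟨h, by simp⟩⟩)
    have hle : ∀ w, (2 : ℝ) * (H.filter (fun p => p.1 = u ∧ w ∈ p.2)).card ≤
        (Finset.univ.filter fun z : Fin n × Fin n => R u w z.1 z.2).card := by
      intro w
      exact_mod_cast two_mul_deg_le H h3 R hR u w
    rw [Fintype.card_fin]
    have hv := hle v
    have hv' := hle v'
    linarith
  -- an enumeration of `B`
  obtain ⟨b, hb, hbB⟩ : ∃ b : Fin 3 → Fin n, Function.Injective b ∧ Finset.univ.image b = B := by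
    let e := B.equivFinOfCardEq hB
    refine ⟨fun i => (e.symm i : Fin n), fun i j h => e.symm.injective (Subtype.ext h), ?_⟩
    ext v
    simp only [Finset.mem_image, Finset.mem_univ, true_and]
    constructor
    · rintro ⟨i, rfl⟩; exact (e.symm i).2
    · intro hv; exact ⟨e ⟨v, hv⟩, by simp⟩
  have hfin := config_sets_count ε hε R hsymm hex hdeg'
    (by simp only [Fintype.card_fin]; omega) (by rwa [Fintype.card_fin]) a b
  rw [Fintype.card_fin] at hfin
  set 𝒯 := {T : Finset (Fin (n / 3)) × Finset (Fin n) |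
              T.1.card + T.2.card = 24 ∧
              InducedPM (n / 3) n H T.1 T.2 ∧
              InducedPM (n / 3) n H (insert a T.1) (B ∪ T.2)} with h𝒯
  replace hfin : ε ^ 10 / 5832 * (n : ℝ) ^ 24 ≤
      ((Nat.factorial 6 * Nat.factorial 18 : ℕ) : ℝ) * (𝒯.ncard : ℝ) := by
    refine hfin.trans (mul_le_mul_of_nonneg_left (Nat.cast_le.2 ?_) (Nat.cast_nonneg _))
    refine Set.ncard_le_ncard ?_ (Set.toFinite _)
    rintro ⟨T₁, T₂⟩ ⟨z, hz, ⟨hf, hfa⟩, ⟨hg, hgb⟩, h₁, h₂⟩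
    have e₁ : T₁ = Finset.univ.image z.1 := by
      rw [← Finset.coe_inj, Finset.coe_image, Finset.coe_univ, Set.image_univ]; exact h₁
    have e₂ : T₂ = Finset.univ.image z.2 := by
      rw [← Finset.coe_inj, Finset.coe_image, Finset.coe_univ, Set.image_univ]; exact h₂
    subst e₁ e₂
    have hcfg : IsConfig (fun u x p q => (u, ({x, p, q} : Finset (Fin n))) ∈ H) a b z := by
      have hRe : R = fun u x p q => (u, ({x, p, q} : Finset (Fin n))) ∈ H := by
        funext u x p q; exact propext (hR u x p q)
      rwa [hRe] at hz
    have := absorbing_of_config a b hb z hcfg hf hfa hg fun k hk => by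
      obtain ⟨i, -, hi⟩ := Finset.mem_image.1 hk
      exact hgb k i hi.symm
    rw [hbB] at this
    exact this
  have hpow : ε ^ ((23 : ℝ) / 2) ≤ ε ^ 10 := by
    rw [← Real.rpow_natCast]
    exact Real.rpow_le_rpow_of_exponent_ge hε hε1.le (by norm_num)
  have htwo : (1 : ℝ) ≤ 2 ^ ((37 : ℝ) / 2) := Real.one_le_rpow (by norm_num) (by norm_num)
  -- `24! / (6! · 18!) = 134596` absorbs the factor `5832`
  have hfac : (5832 : ℝ) * ((Nat.factorial 6 * Nat.factorial 18 : ℕ) : ℝ) ≤ Nat.factorial 24 := by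
    norm_num [Nat.factorial]
  have hK : (0 : ℝ) < ((Nat.factorial 6 * Nat.factorial 18 : ℕ) : ℝ) :=
    Nat.cast_pos.2 (Nat.mul_pos (Nat.factorial_pos _) (Nat.factorial_pos _))
  generalize ((Nat.factorial 6 * Nat.factorial 18 : ℕ) : ℝ) = K at hfin hfac hK
  calc ε ^ ((23 : ℝ) / 2) / ((Nat.factorial 24 : ℝ) * (2 : ℝ) ^ ((37 : ℝ) / 2)) * (n : ℝ) ^ 24
      ≤ ε ^ 10 / (5832 * K * 1) * (n : ℝ) ^ 24 := by gcongr
    _ = ε ^ 10 / 5832 * (n : ℝ) ^ 24 / K := by field_simp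
    _ ≤ 𝒯.ncard := by
        rw [div_le_iff₀ hK]
        linarith
end

section
/- Let 0 < ε ≪ 1 and let F be a 3-uniform hypergraph on n vertices such that deg_F(u) + deg_F(w) > (1/2 + ε)n² for every pair of adjacent vertices u, w. Let x be a vertex of minimum degree in F. Then for every vertex v adjacent to x and every vertex v′ ≠ v, we have |N_F(v) ∩ N_F(v′)| ≥ ε n². -/
/-!
Since `x` has minimum degree and `v` is adjacent to `x`, every `v'` satisfies
`deg v + deg v' ≥ deg v + deg x > (1/2 + ε)n²`.  The links `N(v)` and `N(v')` have `deg v` and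
`deg v'` elements (`card_link`) and both consist of pairs of vertices, so their union has at most
`n.choose 2 ≤ n²/2` elements.  By inclusion-exclusion their intersection has at least `εn²`.
-/

/-- The size of the link of `u` is the degree of `u`: removing `u` from an edge is inverse to
inserting it into a link element. -/
lemma card_link {α : Type*} [Fintype α] [DecidableEq α] (E : Finset (Finset α)) (u : α) :
    (Finset.univ.filter (fun e : Finset α => u ∉ e ∧ insert u e ∈ E)).card
      = (E.filter (fun e => u ∈ e)).card := by
  refine Finset.card_bij' (fun e _ => insert u e) (fun e _ => e.erase u) ?_ ?_ ?_ ?_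
  · intro e he
    simp only [Finset.mem_filter, Finset.mem_univ, true_and] at he
    simp [he.2]
  · intro e he
    simp only [Finset.mem_filter] at he
    simp [Finset.insert_erase he.2, he.1]
  · intro e he
    simp only [Finset.mem_filter, Finset.mem_univ, true_and] at he
    exact Finset.erase_insert he.1
  · intro e he
    simp only [Finset.mem_filter] at he
    exact Finset.insert_erase he.2

lemma link_subset_pairs {α : Type*} [Fintype α] [DecidableEq α] (E : Finset (Finset α))
    (h3 : ∀ e ∈ E, e.card = 3) (u : α) :
    Finset.univ.filter (fun e : Finset α => u ∉ e ∧ insert u e ∈ E)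
      ⊆ Finset.powersetCard 2 Finset.univ := by
  intro e he
  simp only [Finset.mem_filter, Finset.mem_univ, true_and] at he
  have h := h3 _ he.2
  rw [Finset.card_insert_of_notMem he.1] at h
  simp only [Finset.mem_powersetCard, Finset.subset_univ, true_and]
  omega

/-- Let `0 < ε < 1` and let `E` be a 3-graph on `n` vertices in
which adjacent vertices have degree sum `> (1/2 + ε)n²`.  Let `x` be a vertex of
minimum degree.  Then for every vertex `v` adjacent to `x` and every `v' ≠ v`,
`|N(v) ∩ N(v')| ≥ εn²`, where `N(u) = {e ⊆ V∖{u} : e ∪ {u} ∈ E}`. -/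
theorem stmt_9 (ε : ℝ) (hε0 : 0 < ε) (hε1 : ε < 1) (n : ℕ)
    (E : Finset (Finset (Fin n)))
    (h3 : ∀ e ∈ E, e.card = 3)
    (hdeg : ∀ u w : Fin n, u ≠ w → (∃ e ∈ E, u ∈ e ∧ w ∈ e) →
      (((E.filter (fun e => u ∈ e)).card + (E.filter (fun e => w ∈ e)).card : ℝ)
        > (1 / 2 + ε) * (n : ℝ) ^ 2))
    (x : Fin n)
    (hx : ∀ y : Fin n,
      (E.filter (fun e => x ∈ e)).card ≤ (E.filter (fun e => y ∈ e)).card)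
    (v : Fin n) (hv : v ≠ x ∧ ∃ e ∈ E, x ∈ e ∧ v ∈ e)
    (v' : Fin n) (hv' : v' ≠ v) :
    (((Finset.univ.filter (fun e : Finset (Fin n) => v ∉ e ∧ insert v e ∈ E))
        ∩ (Finset.univ.filter (fun e : Finset (Fin n) => v' ∉ e ∧ insert v' e ∈ E))).card : ℝ)
      ≥ ε * (n : ℝ) ^ 2 := by
  obtain ⟨hvx, e, he, hxe, hve⟩ := hv
  have hsum := hdeg v x hvx ⟨e, he, hve, hxe⟩
  have hmin : ((E.filter (fun e => x ∈ e)).card : ℝ) ≤ (E.filter (fun e => v' ∈ e)).card := by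
    exact_mod_cast hx v'
  have hunion := Finset.card_le_card
    (Finset.union_subset (link_subset_pairs E h3 v) (link_subset_pairs E h3 v'))
  rw [Finset.card_powersetCard, Finset.card_univ, Fintype.card_fin] at hunion
  have hchoose : ((n.choose 2 : ℕ) : ℝ) ≤ (n : ℝ) ^ 2 / 2 := by
    rw [Nat.cast_choose_two]
    nlinarith [Nat.cast_nonneg (α := ℝ) n]
  have hie := Finset.card_union_add_card_inter
    (Finset.univ.filter (fun e : Finset (Fin n) => v ∉ e ∧ insert v e ∈ E))
    (Finset.univ.filter (fun e : Finset (Fin n) => v' ∉ e ∧ insert v' e ∈ E))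
  rw [card_link E v, card_link E v'] at hie
  have hunion' := (Nat.cast_le (α := ℝ)).mpr hunion
  have hie' := congrArg (Nat.cast (R := ℝ)) hie
  push_cast at hie'
  linarith
end

section
/- Let 0 < ρ ≪ ε ≪ 1, let n be sufficiently large and divisible by 3, and let H be a (1,3)-partite 4-graph with partition classes Q and P, 3|Q| = |P| = n. Suppose that for every balanced 4-set A (with |A∩Q| = 1, |A∩P| = 3) the family L(A) of absorbing 24-sets for A satisfies |L(A)| ≥ (ε^{23/2}/(24!·2^{37/2}))·n^{24}. Then there exists a family T of balanced 24-subsets of V(H) such that: (1) |T| ≤ ρn; (2) |T ∩ L(A)| ≥ ρ^{1.1}n for every balanced 4-set A; and (3) the number of pairs of members of T that intersect is at most ρ^{1.2}n. -/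
/-- `T = (T₁, T₂)` is an absorbing set for the balanced 4-set `A = {a} ∪ B`:
both `H[T]` and `H[A ∪ T]` have perfect matchings. -/
def AbsorbingFor (m n : ℕ) (H : Finset (Fin m × Finset (Fin n)))
    (T : Finset (Fin m) × Finset (Fin n)) (a : Fin m) (B : Finset (Fin n)) : Prop :=
  InducedPM m n H T.1 T.2 ∧ InducedPM m n H (insert a T.1) (B ∪ T.2)

open Finset in
/-- Greedy selection with a potential function. `R` is the conflict relation; each element
conflicts with at most `D` others, and `k * D` is small compared with every `L i`. -/
lemma exists_disjoint_family {α ι : Type*} [DecidableEq α] [Fintype ι] [Nonempty ι]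
    (X : Finset α) (L : ι → Finset α) (R : α → α → Prop) (hsymm : ∀ x y, R x y → R y x)
    (hrefl : ∀ x ∈ X, R x x) [DecidableRel R] (M D p : ℝ) (hM : 0 < M) (hp : 0 < p) (hD0 : 0 ≤ D)
    (hX : (#X : ℝ) ≤ M) (hD : ∀ t ∈ X, (#{x ∈ X | R t x} : ℝ) ≤ D)
    (hLX : ∀ i, L i ⊆ X) (hL : ∀ i, 2 * p * M ≤ #(L i)) (k : ℕ) (hk : k * D ≤ p * M) :
    ∃ T ⊆ X, #T = k ∧ (∀ x ∈ T, ∀ y ∈ T, x ≠ y → ¬ R x y) ∧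
      ∑ i, (1 / 2 : ℝ) ^ #(T ∩ L i) ≤ Fintype.card ι * Real.exp (-(p / 2) * k) := by
  induction k with
  | zero => exact ⟨∅, by simp⟩
  | succ k ih =>
    push_cast at hk
    obtain ⟨T, hTX, hTk, hT, hW⟩ := ih (by nlinarith)
    set W : ℝ := ∑ i, (1 / 2 : ℝ) ^ #(T ∩ L i) with hWdef
    have hW0 : 0 ≤ W := Finset.sum_nonneg fun i _ => by positivity
    set Y := {x ∈ X | ∀ t ∈ T, ¬ R t x} with hY
    -- few elements are blocked by the family chosen so far
    have hbad : (#(T.biUnion fun t => {x ∈ X | R t x}) : ℝ) ≤ k * D := by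
      calc (#(T.biUnion fun t => {x ∈ X | R t x}) : ℝ)
          ≤ ∑ t ∈ T, (#{x ∈ X | R t x} : ℝ) := by exact_mod_cast card_biUnion_le
        _ ≤ ∑ t ∈ T, D := Finset.sum_le_sum fun t ht => hD t (hTX ht)
        _ = k * D := by simp [hTk]
    have hLY : ∀ i, p * M ≤ #(Y ∩ L i) := by
      intro i
      have hsub : L i ⊆ (Y ∩ L i) ∪ T.biUnion fun t => {x ∈ X | R t x} := by
        intro x hx
        have hxX := hLX i hx
        by_cases h : ∀ t ∈ T, ¬ R t x
        · simp [hY, hx, hxX]; grind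
        · simp [hY, hx, hxX]; grind
      have h1 : (#(L i) : ℝ) ≤ #(Y ∩ L i) + #(T.biUnion fun t => {x ∈ X | R t x}) := by
        exact_mod_cast (card_le_card hsub).trans (card_union_le _ _)
      have := hL i
      nlinarith
    have hYM : (#Y : ℝ) ≤ M := le_trans (by exact_mod_cast card_filter_le _ _) hX
    have hYne : Y.Nonempty := by
      obtain ⟨i⟩ := ‹Nonempty ι›
      have h1 : 0 < #(Y ∩ L i) := by
        have : (0 : ℝ) < #(Y ∩ L i) := lt_of_lt_of_le (by positivity) (hLY i)
        exact_mod_cast this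
      exact (card_pos.1 h1).mono inter_subset_left
    have hfresh : ∀ y ∈ Y, y ∉ T := fun y hy hyT =>
      (mem_filter.1 hy).2 y hyT (hrefl y (mem_filter.1 hy).1)
    have hstep : ∀ y ∈ Y, ∀ i, (1 / 2 : ℝ) ^ #(insert y T ∩ L i)
        = (1 / 2 : ℝ) ^ #(T ∩ L i) * (1 - if y ∈ L i then 1 / 2 else 0) := by
      intro y hy i
      split_ifs with h
      · rw [insert_inter_of_mem h, card_insert_of_notMem (by simp [hfresh y hy]), pow_succ]
        norm_num
      · rw [insert_inter_of_notMem h]; simp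
    have havg : ∑ y ∈ Y, ∑ i, (1 / 2 : ℝ) ^ #(insert y T ∩ L i)
        ≤ ∑ y ∈ Y, W * Real.exp (-(p / 2)) := by
      calc ∑ y ∈ Y, ∑ i, (1 / 2 : ℝ) ^ #(insert y T ∩ L i)
          = ∑ i, ∑ y ∈ Y, (1 / 2 : ℝ) ^ #(T ∩ L i) * (1 - if y ∈ L i then 1 / 2 else 0) := by
            rw [Finset.sum_comm]
            exact sum_congr rfl fun i _ => sum_congr rfl fun y hy => hstep y hy i
        _ = ∑ i, (1 / 2 : ℝ) ^ #(T ∩ L i) * (#Y - #(Y ∩ L i) / 2) := by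
            refine sum_congr rfl fun i _ => ?_
            rw [← Finset.mul_sum, Finset.sum_sub_distrib, ← Finset.sum_filter,
              Finset.filter_mem_eq_inter]
            simp [div_eq_mul_inv]
        _ ≤ ∑ i, (1 / 2 : ℝ) ^ #(T ∩ L i) * (#Y * Real.exp (-(p / 2))) := by
            refine Finset.sum_le_sum fun i _ => mul_le_mul_of_nonneg_left ?_ (by positivity)
            have h1 := Real.add_one_le_exp (-(p / 2))
            have h2 := hLY i
            have h3 : (0 : ℝ) ≤ #Y := by positivity
            have h4 := mul_le_mul_of_nonneg_left h1 h3
            nlinarith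
        _ = ∑ y ∈ Y, W * Real.exp (-(p / 2)) := by
            rw [← Finset.sum_mul, sum_const, nsmul_eq_mul]; ring
    obtain ⟨y, hy, hle⟩ := exists_le_of_sum_le hYne havg
    have hyX := (mem_filter.1 hy).1
    have hyR := (mem_filter.1 hy).2
    refine ⟨insert y T, insert_subset hyX hTX, by rw [card_insert_of_notMem (hfresh y hy), hTk],
      ?_, hle.trans ?_⟩
    · intro a ha b hb hab
      rcases mem_insert.1 ha with rfl | ha' <;> rcases mem_insert.1 hb with rfl | hb'
      · exact absurd rfl hab
      · exact fun h => hyR b hb' (hsymm _ _ h)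
      · exact hyR a ha'
      · exact hT a ha' b hb' hab
    · calc W * Real.exp (-(p / 2))
          ≤ (Fintype.card ι * Real.exp (-(p / 2) * k)) * Real.exp (-(p / 2)) :=
            mul_le_mul_of_nonneg_right hW (Real.exp_pos _).le
        _ = _ := by rw [mul_assoc, ← Real.exp_add]; push_cast; ring_nf

open Finset in
lemma card_powersetCard_meeting_le (N r : ℕ) (S : Finset (Fin N)) :
    #{x ∈ powersetCard (r + 1) (univ : Finset (Fin N)) | ¬ Disjoint S x} ≤ #S * N ^ r := by
  classical
  have hsub : {x ∈ powersetCard (r + 1) (univ : Finset (Fin N)) | ¬ Disjoint S x}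
      ⊆ (S ×ˢ powersetCard r (univ : Finset (Fin N))).image fun q => insert q.1 q.2 := by
    intro x hx
    simp only [mem_filter, mem_powersetCard, not_disjoint_iff] at hx
    obtain ⟨⟨_, hc⟩, v, hvS, hvx⟩ := hx
    refine mem_image.2 ⟨(v, x.erase v), ?_, insert_erase hvx⟩
    simp [hvS, card_erase_of_mem hvx, hc]
  calc _ ≤ _ := card_le_card hsub
    _ ≤ #(S ×ˢ powersetCard r (univ : Finset (Fin N))) := card_image_le
    _ = #S * N.choose r := by simp
    _ ≤ #S * N ^ r := Nat.mul_le_mul_left _ (Nat.choose_le_pow _ _)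

/-- The balanced 24-sets, as pairs of a 6-subset of `Q` and an 18-subset of `P`. -/
abbrev balancedSets (m n : ℕ) : Finset (Finset (Fin m) × Finset (Fin n)) :=
  Finset.powersetCard 6 Finset.univ ×ˢ Finset.powersetCard 18 Finset.univ

lemma mem_balancedSets {m n : ℕ} (t : Finset (Fin m) × Finset (Fin n)) :
    t ∈ balancedSets m n ↔ 3 * t.1.card = t.2.card ∧ t.1.card + t.2.card = 24 := by
  simp only [Finset.mem_product, Finset.mem_powersetCard, Finset.subset_univ, true_and]
  omega

/-- Two pairs meet when they share a vertex in either class. -/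
abbrev Meets {m n : ℕ} (s t : Finset (Fin m) × Finset (Fin n)) : Prop :=
  ¬ Disjoint s.1 t.1 ∨ ¬ Disjoint s.2 t.2

open Finset in
lemma card_balancedSets_le {m n : ℕ} (hmn : m ≤ n) : #(balancedSets m n) ≤ n ^ 24 := by
  rw [card_product, card_powersetCard, card_powersetCard, card_univ, card_univ, Fintype.card_fin,
    Fintype.card_fin]
  calc m.choose 6 * n.choose 18 ≤ m ^ 6 * n ^ 18 :=
        Nat.mul_le_mul (Nat.choose_le_pow _ _) (Nat.choose_le_pow _ _)
    _ ≤ n ^ 6 * n ^ 18 := Nat.mul_le_mul_right _ (Nat.pow_le_pow_left hmn 6)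
    _ = n ^ 24 := by ring

open Finset in
lemma card_meets_le {m n : ℕ} (hmn : m ≤ n) (t : Finset (Fin m) × Finset (Fin n))
    (ht : t ∈ balancedSets m n) : #{x ∈ balancedSets m n | Meets t x} ≤ 24 * n ^ 23 := by
  classical
  obtain ⟨h1, h2⟩ := mem_product.1 ht
  have h1 := (mem_powersetCard.1 h1).2
  have h2 := (mem_powersetCard.1 h2).2
  have hsub : {x ∈ balancedSets m n | Meets t x} ⊆
      ({x ∈ powersetCard (5 + 1) (univ : Finset (Fin m)) | ¬ Disjoint t.1 x} ×ˢ
        powersetCard 18 univ) ∪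
      (powersetCard 6 univ ×ˢ
        {x ∈ powersetCard (17 + 1) (univ : Finset (Fin n)) | ¬ Disjoint t.2 x}) := by
    intro x hx
    simp only [mem_filter, mem_product, mem_union] at hx ⊢
    tauto
  have e1 := card_powersetCard_meeting_le m 5 t.1
  have e2 := card_powersetCard_meeting_le n 17 t.2
  rw [h1] at e1
  rw [h2] at e2
  refine (card_le_card hsub).trans ((card_union_le _ _).trans ?_)
  rw [card_product, card_product, card_powersetCard, card_powersetCard, card_univ, card_univ,
    Fintype.card_fin, Fintype.card_fin]
  have e3 : m ^ 5 ≤ n ^ 5 := Nat.pow_le_pow_left hmn 5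
  have e4 : m.choose 6 ≤ n ^ 6 := (Nat.choose_le_pow _ _).trans (Nat.pow_le_pow_left hmn 6)
  have e5 : n.choose 18 ≤ n ^ 18 := Nat.choose_le_pow _ _
  calc _ ≤ (6 * n ^ 5) * n ^ 18 + n ^ 6 * (18 * n ^ 17) :=
        add_le_add (Nat.mul_le_mul (e1.trans (Nat.mul_le_mul_left _ e3)) e5)
          (Nat.mul_le_mul e4 e2)
    _ = 24 * n ^ 23 := by ring

/-- Exponential decay beats the polynomial number of constraints. -/
lemma eventually_pow_mul_exp_lt (b d : ℝ) (hb : 0 < b) (hd : 0 < d) :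
    ∃ n₀ : ℕ, ∀ n : ℕ, n₀ ≤ n → (n : ℝ) ^ 4 * Real.exp (-(b * n)) < d := by
  have h := (Real.tendsto_pow_mul_exp_neg_atTop_nhds_zero 4).comp
    ((tendsto_natCast_atTop_atTop (R := ℝ)).const_mul_atTop hb)
  have h' := h.eventually_lt_const (show (0 : ℝ) < b ^ 4 * d by positivity)
  obtain ⟨n₀, hn₀⟩ := Filter.eventually_atTop.1 h'
  refine ⟨n₀, fun n hn => ?_⟩
  have := hn₀ n hn
  simp only [Function.comp_apply, mul_pow, mul_assoc] at this
  exact lt_of_mul_lt_mul_left this (by positivity)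

/-- For `0 < ρ ≪ ε ≪ 1` and `n` large, divisible by 3: if every
balanced 4-set `A = {a} ∪ B` has at least `(ε^{23/2}/(24!·2^{37/2}))·n²⁴`
absorbing balanced 24-sets, then there is a family `T` of balanced 24-sets with
`|T| ≤ ρn`, `|T ∩ L(A)| ≥ ρ^{1.1}n` for every balanced 4-set `A`, and the number
of intersecting (unordered, here counted as ordered divided by two) pairs of
members of `T` is at most `ρ^{1.2}n`. -/
theorem stmt_10 :
    ∀ ε : ℝ, 0 < ε → ε < 1 →
    ∃ ρ₀ : ℝ, 0 < ρ₀ ∧ ∀ ρ : ℝ, 0 < ρ → ρ < ρ₀ →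
    ∃ n₀ : ℕ, ∀ n : ℕ, n₀ ≤ n → 3 ∣ n →
    ∀ H : Finset (Fin (n / 3) × Finset (Fin n)),
      (∀ p ∈ H, p.2.card = 3) →
      (∀ a : Fin (n / 3), ∀ B : Finset (Fin n), B.card = 3 →
        (({T : Finset (Fin (n / 3)) × Finset (Fin n) |
              3 * T.1.card = T.2.card ∧ T.1.card + T.2.card = 24 ∧
              AbsorbingFor (n / 3) n H T a B}.ncard : ℝ)
          ≥ ε ^ ((23 : ℝ) / 2) / ((Nat.factorial 24 : ℝ) * (2 : ℝ) ^ ((37 : ℝ) / 2))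
              * (n : ℝ) ^ 24)) →
      ∃ T : Finset (Finset (Fin (n / 3)) × Finset (Fin n)),
        (∀ t ∈ T, 3 * t.1.card = t.2.card ∧ t.1.card + t.2.card = 24) ∧
        ((T.card : ℝ) ≤ ρ * n) ∧
        (∀ a : Fin (n / 3), ∀ B : Finset (Fin n), B.card = 3 →
          (({t : Finset (Fin (n / 3)) × Finset (Fin n) |
                t ∈ T ∧ AbsorbingFor (n / 3) n H t a B}.ncard : ℝ) ≥ ρ ^ (1.1 : ℝ) * n)) ∧
        (({q : (Finset (Fin (n / 3)) × Finset (Fin n))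
              × (Finset (Fin (n / 3)) × Finset (Fin n)) |
              q.1 ∈ T ∧ q.2 ∈ T ∧ q.1 ≠ q.2 ∧
              (¬ Disjoint q.1.1 q.2.1 ∨ ¬ Disjoint q.1.2 q.2.2)}.ncard : ℝ)
          ≤ 2 * (ρ ^ (1.2 : ℝ) * n)) := by
  classical
  intro ε hε _
  set c : ℝ := ε ^ ((23 : ℝ) / 2) / ((Nat.factorial 24 : ℝ) * (2 : ℝ) ^ ((37 : ℝ) / 2)) with hc
  have hc0 : 0 < c := by positivity
  clear_value c
  refine ⟨min (c / 48) ((c / 8) ^ 10), by positivity, fun ρ hρ hρ₀ => ?_⟩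
  have hρ1 : ρ < c / 48 := hρ₀.trans_le (min_le_left _ _)
  have hρ2 : ρ < (c / 8) ^ 10 := hρ₀.trans_le (min_le_right _ _)
  have hρpow : ρ ^ (1.1 : ℝ) ≤ c / 8 * ρ := by
    have h1 : ρ ^ (1.1 : ℝ) = ρ ^ (0.1 : ℝ) * ρ := by
      rw [← Real.rpow_add_one hρ.ne']; norm_num
    have h2 : ρ ^ (0.1 : ℝ) ≤ c / 8 := by
      calc ρ ^ (0.1 : ℝ) ≤ ((c / 8) ^ 10) ^ (0.1 : ℝ) :=
            Real.rpow_le_rpow hρ.le hρ2.le (by norm_num)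
        _ = c / 8 := by
            rw [← Real.rpow_natCast, ← Real.rpow_mul (by positivity)]; norm_num
    rw [h1]
    exact mul_le_mul_of_nonneg_right h2 hρ.le
  obtain ⟨n₀, hn₀⟩ := eventually_pow_mul_exp_lt (c * ρ / 8) (Real.exp (-(c / 4)))
    (by positivity) (Real.exp_pos _)
  refine ⟨max n₀ 3, fun n hn _ H _ hL => ?_⟩
  have hn1 : n₀ ≤ n := le_trans (le_max_left _ _) hn
  have hn3 : 3 ≤ n := le_trans (le_max_right _ _) hn
  have hmn : n / 3 ≤ n := Nat.div_le_self _ _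
  have hnpos : (0 : ℝ) < n := by exact_mod_cast (by omega : 0 < n)
  -- the balanced 4-sets
  let ι := Fin (n / 3) × {B : Finset (Fin n) // B.card = 3}
  have : Nonempty ι := by
    obtain ⟨B, _, hB⟩ := Finset.exists_subset_card_eq
      (s := (Finset.univ : Finset (Fin n))) (n := 3) (by simpa using hn3)
    exact ⟨(⟨0, by omega⟩, ⟨B, hB⟩)⟩
  have hι : (Fintype.card ι : ℝ) ≤ (n : ℝ) ^ 4 := by
    have h : Fintype.card ι ≤ n ^ 4 := by
      rw [Fintype.card_prod, Fintype.card_finset_len, Fintype.card_fin, Fintype.card_fin]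
      calc n / 3 * n.choose 3 ≤ n * n ^ 3 := Nat.mul_le_mul hmn (Nat.choose_le_pow _ _)
        _ = n ^ 4 := by ring
    exact_mod_cast h
  let L : ι → Finset (Finset (Fin (n / 3)) × Finset (Fin n)) := fun i =>
    (balancedSets (n / 3) n).filter fun t => AbsorbingFor (n / 3) n H t i.1 i.2.1
  have hLcard : ∀ i, 2 * (c / 2) * (n : ℝ) ^ 24 ≤ (L i).card := by
    intro i
    have h := hL i.1 i.2.1 i.2.2
    have heq : {T : Finset (Fin (n / 3)) × Finset (Fin n) |
        3 * T.1.card = T.2.card ∧ T.1.card + T.2.card = 24 ∧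
          AbsorbingFor (n / 3) n H T i.1 i.2.1} = (L i : Set _) := by
      ext t
      simp only [Set.mem_ofPred_eq, L, Finset.coe_filter, mem_balancedSets, and_assoc]
    rw [heq, Set.ncard_coe_finset] at h
    linarith
  have hfloor : ((⌊ρ * n⌋₊ : ℕ) : ℝ) ≤ ρ * n := Nat.floor_le (by positivity)
  obtain ⟨T, hTX, hTk, hTR, hW⟩ := exists_disjoint_family (balancedSets (n / 3) n) L Meets
    (fun x y h => h.imp (fun h h' => h h'.symm) (fun h h' => h h'.symm))
    (fun x hx => by
      have h := (mem_balancedSets x).1 hx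
      left
      rw [disjoint_self, Finset.bot_eq_empty, ← Finset.card_eq_zero]
      omega)
    ((n : ℝ) ^ 24) (24 * (n : ℝ) ^ 23) (c / 2) (by positivity) (by positivity) (by positivity)
    (by exact_mod_cast card_balancedSets_le hmn)
    (fun t ht => by exact_mod_cast card_meets_le hmn t ht)
    (fun i => Finset.filter_subset _ _) hLcard ⌊ρ * n⌋₊
    (by
      calc ((⌊ρ * n⌋₊ : ℕ) : ℝ) * (24 * (n : ℝ) ^ 23) ≤ (ρ * n) * (24 * (n : ℝ) ^ 23) :=
            mul_le_mul_of_nonneg_right hfloor (by positivity)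
        _ = 24 * ρ * (n : ℝ) ^ 24 := by ring
        _ ≤ c / 2 * (n : ℝ) ^ 24 := mul_le_mul_of_nonneg_right (by linarith) (by positivity))
  have hsingle : ∀ i : ι, (1 / 2 : ℝ) ^ (T ∩ L i).card ≤
      (n : ℝ) ^ 4 * Real.exp (-(c / 2 / 2) * (⌊ρ * n⌋₊ : ℕ)) := by
    intro i
    refine le_trans ?_ (hW.trans (mul_le_mul_of_nonneg_right hι (Real.exp_pos _).le))
    exact Finset.single_le_sum (f := fun i : ι => (1 / 2 : ℝ) ^ (T ∩ L i).card)
      (fun _ _ => pow_nonneg (by norm_num) _) (Finset.mem_univ i)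
  refine ⟨T, fun t ht => (mem_balancedSets t).1 (hTX ht), by rw [hTk]; exact hfloor, ?_, ?_⟩
  · intro a B hB
    have heq : {t : Finset (Fin (n / 3)) × Finset (Fin n) |
        t ∈ T ∧ AbsorbingFor (n / 3) n H t a B} = (T ∩ L (a, ⟨B, hB⟩) : Finset _) := by
      ext t
      simp only [Set.mem_ofPred_eq, L, Finset.coe_inter, Set.mem_inter_iff, Finset.mem_coe,
        Finset.mem_filter]
      exact ⟨fun h => ⟨h.1, hTX h.1, h.2⟩, fun h => ⟨h.1, h.2.2⟩⟩
    rw [heq, Set.ncard_coe_finset]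
    set x := (T ∩ L (a, ⟨B, hB⟩)).card with hx
    by_contra hlt
    rw [ge_iff_le, not_le] at hlt
    have h1 : (1 / 2 : ℝ) ^ x ≤ (n : ℝ) ^ 4 * Real.exp (-(c / 2 / 2) * (⌊ρ * n⌋₊ : ℕ)) :=
      hsingle (a, ⟨B, hB⟩)
    have h2 : Real.exp (-(x : ℝ)) ≤ (1 / 2 : ℝ) ^ x := by
      have he : Real.exp (-1) ≤ 1 / 2 := by
        rw [Real.exp_neg, one_div]
        exact inv_anti₀ (by norm_num) (by linarith [Real.add_one_le_exp (1 : ℝ)])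
      calc Real.exp (-(x : ℝ)) = Real.exp (-1) ^ x := by rw [← Real.exp_nat_mul]; ring_nf
        _ ≤ _ := pow_le_pow_left₀ (Real.exp_pos _).le he x
    have h3 : ρ * n - 1 < (⌊ρ * n⌋₊ : ℕ) := Nat.sub_one_lt_floor _
    have hxs : (x : ℝ) ≤ c / 8 * ρ * n :=
      hlt.le.trans (mul_le_mul_of_nonneg_right hρpow hnpos.le)
    have h4 := hn₀ n hn1
    have h5 : Real.exp (-(x : ℝ)) * Real.exp (-(c / 4)) ≤
        (n : ℝ) ^ 4 * Real.exp (-(c * ρ / 8 * n)) * Real.exp (-(x : ℝ)) := by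
      calc Real.exp (-(x : ℝ)) * Real.exp (-(c / 4))
          ≤ (n : ℝ) ^ 4 * Real.exp (-(c / 2 / 2) * (⌊ρ * n⌋₊ : ℕ)) * Real.exp (-(c / 4)) :=
            mul_le_mul_of_nonneg_right (h2.trans h1) (Real.exp_pos _).le
        _ = (n : ℝ) ^ 4 * Real.exp (-(c / 2 / 2) * (⌊ρ * n⌋₊ : ℕ) + -(c / 4)) := by
            rw [mul_assoc, ← Real.exp_add]
        _ ≤ (n : ℝ) ^ 4 * Real.exp (-(c * ρ / 8 * n) + -(x : ℝ)) := by
            refine mul_le_mul_of_nonneg_left (Real.exp_le_exp.2 ?_) (by positivity)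
            nlinarith
        _ = _ := by rw [mul_assoc, ← Real.exp_add]
    have h6 := mul_lt_mul_of_pos_right h4 (Real.exp_pos (-(x : ℝ)))
    linarith
  · have hempty : {q : (Finset (Fin (n / 3)) × Finset (Fin n))
        × (Finset (Fin (n / 3)) × Finset (Fin n)) |
        q.1 ∈ T ∧ q.2 ∈ T ∧ q.1 ≠ q.2 ∧
        (¬ Disjoint q.1.1 q.2.1 ∨ ¬ Disjoint q.1.2 q.2.2)} = ∅ := by
      ext q
      simp only [Set.mem_ofPred_eq, Set.mem_empty_iff_false, iff_false]
      rintro ⟨h1, h2, h3, h4⟩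
      exact hTR _ h1 _ h2 h3 h4
    rw [hempty, Set.ncard_empty]
    have := Real.rpow_nonneg hρ.le (1.2 : ℝ)
    push_cast
    positivity
end

section
/- There exists n₀ ∈ ℕ such that for all integers n ≥ n₀ divisible by 3 the following holds. Let H be a (1,3)-partite 4-graph with partition classes Q and P, where |P| = n and |Q| = n/3. Suppose every vertex of Q is adjacent to every vertex of P, and for any u ∈ Q and v, v′ ∈ P with deg({u,v,v′}) > 0 we have deg({u,v}) + deg({u,v′}) > (2/3)n² − (8/3)n + 2. Then H has a fractional perfect matching. -/
/-!
Write `n = 3m`. For `u ∈ Q` let `G u` be the link 3-graph of `u` on `P`. It is enough that every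
`G u` separately has weights of total `1` putting `1/m` on each vertex of `P`: all these weights
together form the required fractional perfect matching, as there are `m` vertices `u`. So fix a
3-graph `G` on `3m ≥ 6` vertices without isolated vertices, in which adjacent vertices have degree
sum larger than `(3m - 1)(2m - 2) = (2/3)n² - (8/3)n + 2`.

Such weights exist iff the constant vector `1/m` lies in the convex hull of the indicator vectors
of the edges. If it does not, a separating functional, after an affine normalisation, is a weight
`x ≥ 0` on the vertices with `x v = 0` for some `v`, with `x(e) ≥ 1` on every edge, and with total
less than `m`. `no_light_cover` refutes this as follows.

Let `b` be a neighbour of `v` of least weight `β`, and for a pair `{y, z}` let `c y z ∈ {0, 1, 2}`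
count how many of `vyz`, `byz` are edges, so that `c` sums to `deg v + deg b` over all pairs.

* If `β ≤ 1/2`, put `f = 2x` and `δ = 1 - 2β`. Then `c y z ≤ f y + f z`, with a loss of at least
  `δ` when `c y z = 1`; a pair containing `b` loses at least `1 - δ`, and at least `1` if its count
  is nonzero. Hence over any perfect matching of the vertices `c` sums to at most `2m - 2`: either
  a total loss of `1` occurs below the bound `∑ f < 2m`, or all counts are even and parity applies.
  Averaging over all perfect matchings gives `deg v + deg b ≤ (3m - 1)(2m - 2)`, a contradiction.
  When `3m` is odd, the matchings are taken on the vertices other than `v`, and the codegree of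
  `v` and `b` is bounded by `2m - 2` directly.
* If `β > 1/2`, let `B = {x ≥ β}`, which contains all neighbours of `v`. If `|B| ≥ m`, the same
  argument works with `δ = 0` and `f = 1` on `B`, `f = x / (1 - β)` off `B`. If `|B| < m`, the
  trivial bounds `deg v ≤ C(m - 1, 2)` and `deg b ≤ C(3m - 1, 2)` suffice.
-/

/-! ### Averaging over perfect matchings -/

lemma exists_perm_pair {I : Type*} [DecidableEq I] {i j i' j' : I} (h : i ≠ j) (h' : i' ≠ j') :
    ∃ π : Equiv.Perm I, π i = i' ∧ π j = j' := by
  have h1 : Equiv.swap i i' j ≠ i' := by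
    intro hc
    apply h
    have := (Equiv.swap i i').injective (hc.trans (Equiv.swap_apply_left i i').symm)
    exact this.symm
  refine ⟨(Equiv.swap i i').trans (Equiv.swap (Equiv.swap i i' j) j'), ?_, ?_⟩
  · simp only [Equiv.trans_apply, Equiv.swap_apply_left]
    exact Equiv.swap_apply_of_ne_of_ne h1.symm h'
  · simp

/-- If `c` sums to at most `t` over every perfect matching of a set of `2k` vertices, then it sums
to at most `(2k - 1) t` over all unordered pairs (the sum here runs over ordered pairs). A perfect
matching is encoded by a bijection from `Fin k × Bool`; the average over all bijections does not
depend on the pair of positions considered, by `exists_perm_pair`. -/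
lemma sum_le_of_matchings {W : Type*} [Fintype W] [DecidableEq W] (k : ℕ) (hk : 0 < k)
    (hW : Fintype.card W = 2 * k) (c : W → W → ℕ) (t : ℕ)
    (hdiag : ∀ y, c y y = 0)
    (h : ∀ e : Fin k × Bool ≃ W, ∑ i, c (e (i, false)) (e (i, true)) ≤ t) :
    ∑ y, ∑ z, c y z ≤ 2 * (2 * k - 1) * t := by
  classical
  have hoff : ∑ y, ∑ z, c y z = ∑ p ∈ (Finset.univ : Finset W).offDiag, c p.1 p.2 := by
    rw [← Finset.sum_product', Finset.univ_product_univ]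
    refine (Finset.sum_subset (Finset.subset_univ _) ?_).symm
    rintro ⟨y, z⟩ _ hyz
    have : y = z := by simpa using hyz
    rw [this]; exact hdiag z
  rw [hoff]
  set S : (Fin k × Bool) → (Fin k × Bool) → ℕ :=
    fun i j => ∑ e : Fin k × Bool ≃ W, c (e i) (e j) with hS
  have hconst : ∀ i j i' j', i ≠ j → i' ≠ j' → S i j = S i' j' := by
    intro i j i' j' hij hij'
    obtain ⟨π, hi, hj⟩ := exists_perm_pair hij hij'
    refine (Fintype.sum_equiv (Equiv.equivCongr π (Equiv.refl W)) _ _ ?_)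
    intro e
    simp [Equiv.equivCongr, ← hi, ← hj]
  set i₀ : Fin k := ⟨0, hk⟩
  set S₀ := S (i₀, false) (i₀, true)
  set E := Fintype.card (Fin k × Bool ≃ W)
  have hE : 0 < E := by
    refine Fintype.card_pos_iff.mpr ⟨Fintype.equivOfCardEq ?_⟩
    simp [hW, mul_comm]
  have h1 : ∑ p ∈ (Finset.univ : Finset (Fin k × Bool)).offDiag, S p.1 p.2
      = 2 * k * (2 * k - 1) * S₀ := by
    rw [Finset.sum_congr rfl (g := fun _ => S₀)]
    · rw [Finset.sum_const, Finset.offDiag_card]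
      simp [mul_comm k 2, Nat.mul_sub]
    · intro p hp
      exact hconst _ _ _ _ (by simpa using hp) (by simp)
  have h2 : ∑ p ∈ (Finset.univ : Finset (Fin k × Bool)).offDiag, S p.1 p.2
      = E * ∑ p ∈ (Finset.univ : Finset W).offDiag, c p.1 p.2 := by
    simp only [hS]
    rw [Finset.sum_comm, Finset.sum_congr rfl
      (g := fun _ => ∑ p ∈ (Finset.univ : Finset W).offDiag, c p.1 p.2)]
    · simp [E]
    · intro e _
      refine Finset.sum_equiv (Equiv.prodCongr e e) ?_ ?_
      · simp
      · simp
  have h3 : k * S₀ ≤ E * t := by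
    calc k * S₀ = ∑ i : Fin k, S (i, false) (i, true) := by
          rw [Finset.sum_congr rfl (g := fun _ => S₀)]
          · simp
          · intro i _
            exact hconst _ _ _ _ (by simp) (by simp)
      _ = ∑ e : Fin k × Bool ≃ W, ∑ i, c (e (i, false)) (e (i, true)) := Finset.sum_comm
      _ ≤ ∑ _e : Fin k × Bool ≃ W, t := Finset.sum_le_sum fun e _ => h e
      _ = E * t := by simp [E]
  refine Nat.le_of_mul_le_mul_left ?_ hE
  rw [← h2, h1]
  calc 2 * k * (2 * k - 1) * S₀ = 2 * (2 * k - 1) * (k * S₀) := by ring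
    _ ≤ 2 * (2 * k - 1) * (E * t) := Nat.mul_le_mul_left _ h3
    _ = _ := by ring

/-! ### Pair counts dominated by a vertex weight -/

/-- The pair count `c` is dominated by the vertex weight `f` in the manner needed for the matching
argument: `c y z ≤ f y + f z`, with slack at least `δ` where `c y z = 1`, while pairs containing
`b` have slack at least `1 - δ`, improving to `1` where the count is nonzero. -/
structure PairBound {V : Type*} (f : V → ℝ) (c : V → V → ℕ) (b : V) (δ : ℝ) : Prop where
  nonneg : ∀ y, 0 ≤ f y
  δ_nonneg : 0 ≤ δ
  symm : ∀ y z, c y z = c z y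
  diag : ∀ y, c y y = 0
  le_two : ∀ y z, c y z ≤ 2
  two : ∀ y z, c y z = 2 → 2 ≤ f y + f z
  one : ∀ y z, c y z = 1 → 1 + δ ≤ f y + f z
  base : 1 - δ ≤ f b
  base_one : ∀ z, c b z ≠ 0 → 2 ≤ f b + f z
  base_le : ∀ z, c b z ≤ 1

/-- Over a matching that covers `b`, the counts sum to at most `2m - 2` if the weights sum to less
than `2m`. If some pair has count `1`, the slack there and at `b` adds up to `1`; otherwise all
counts are even. -/
lemma PairBound.sum_add_two_le {V : Type*} {f : V → ℝ} {c : V → V → ℕ} {b : V} {δ : ℝ}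
    (H : PairBound f c b δ) (k m : ℕ) (e : Fin k × Bool → V) (j : Fin k × Bool) (hj : e j = b)
    (hsum : ∑ q, f (e q) < 2 * m) :
    ∑ i, c (e (i, false)) (e (i, true)) + 2 ≤ 2 * m := by
  set g : Fin k → ℝ := fun i => f (e (i, false)) + f (e (i, true)) with hg
  set d : Fin k → ℕ := fun i => c (e (i, false)) (e (i, true)) with hd
  have hgsum : ∑ i, g i < 2 * m := by
    rw [Fintype.sum_prod_type] at hsum
    simpa [hg, add_comm] using hsum
  have hpos : ∀ i, 0 ≤ g i := fun i => add_nonneg (H.nonneg _) (H.nonneg _)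
  have hle : ∀ i, (d i : ℝ) ≤ g i := by
    intro i
    have h2 : d i ≤ 2 := H.le_two _ _
    have hδ := H.δ_nonneg
    rcases (by omega : d i = 0 ∨ d i = 1 ∨ d i = 2) with h | h | h
    · rw [h]; simpa using hpos i
    · have := H.one _ _ h
      rw [h]; push_cast; linarith
    · have := H.two _ _ h
      rw [h]; push_cast; linarith
  have hb0 : (d j.1 : ℝ) + (1 - δ) ≤ g j.1 ∧ (d j.1 ≠ 0 → (d j.1 : ℝ) + 1 ≤ g j.1) := by
    have key : ∀ z, c b z = d j.1 → f b + f z = g j.1 →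
        (d j.1 : ℝ) + (1 - δ) ≤ g j.1 ∧ (d j.1 ≠ 0 → (d j.1 : ℝ) + 1 ≤ g j.1) := by
      intro z h1 h2
      have h3 := H.base_le z
      have hδ := H.δ_nonneg
      rw [← h1, ← h2]
      have h4 : c b z ≠ 0 → (c b z : ℝ) + 1 ≤ f b + f z := by
        intro h
        have h5 := H.base_one z h
        have h6 : c b z = 1 := by omega
        rw [h6]; push_cast; linarith
      refine ⟨?_, h4⟩
      by_cases h : c b z = 0
      · rw [h]; have := H.base; have := H.nonneg z; push_cast; linarith
      · have := h4 h; linarith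
    rcases j with ⟨i, s⟩
    cases s
    · exact key (e (i, true)) (by simp [hd, ← hj]) (by simp [hg, ← hj])
    · exact key (e (i, false)) (by simp [hd, ← hj, H.symm]) (by simp [hg, ← hj, add_comm])
  have hsub : ∑ i, (g i - d i) = ∑ i, g i - (∑ i, d i : ℕ) := by
    rw [Finset.sum_sub_distrib]; push_cast; rfl
  have hfin : 1 ≤ ∑ i, (g i - d i) → ∑ i, d i + 2 ≤ 2 * m := by
    intro h
    have : ((∑ i, d i : ℕ) : ℝ) + 1 < (2 * m : ℕ) := by push_cast at *; linarith
    have : ∑ i, d i + 1 < 2 * m := by exact_mod_cast this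
    omega
  by_cases hex : ∃ i, d i = 1
  · obtain ⟨i, hi⟩ := hex
    apply hfin
    by_cases hij : i = j.1
    · have h1 := hb0.2 (by rw [← hij, hi]; simp)
      have h2 := Finset.single_le_sum (f := fun i => g i - d i)
        (fun i _ => sub_nonneg.mpr (hle i)) (Finset.mem_univ j.1)
      linarith
    · have h1 := hb0.1
      have h3 : 1 + δ ≤ g i := H.one _ _ hi
      have h2 := Finset.sum_le_univ_sum_of_nonneg (f := fun i => g i - d i) (s := {i, j.1})
        (fun i => sub_nonneg.mpr (hle i))
      rw [Finset.sum_pair hij] at h2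
      simp only [hi, Nat.cast_one] at h2
      linarith
  · push Not at hex
    have hev : Even (∑ i, d i) := by
      refine Finset.even_sum _ fun i _ => ?_
      have h2 : d i ≤ 2 := H.le_two _ _
      have := hex i
      rcases (by omega : d i = 0 ∨ d i = 2) with h | h <;> simp [h]
    have h1 : ((∑ i, d i : ℕ) : ℝ) ≤ ∑ i, g i := by
      push_cast; exact Finset.sum_le_sum fun i _ => hle i
    have h2 : ((∑ i, d i : ℕ) : ℝ) < (2 * m : ℕ) := by push_cast at *; linarith
    have h3 : ∑ i, d i < 2 * m := by exact_mod_cast h2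
    obtain ⟨r, hr⟩ := hev
    change ∑ i, d i + 2 ≤ 2 * m
    omega

/-- Bound on the sum of the counts over all ordered pairs of `3m` vertices. The conditions on `v`
matter only for odd `3m`, where the matchings have to avoid one vertex, taken to be `v`. -/
lemma PairBound.sum_le {m : ℕ} (hm : 2 ≤ m) {f : Fin (3 * m) → ℝ}
    {c : Fin (3 * m) → Fin (3 * m) → ℕ} {b v : Fin (3 * m)} {δ : ℝ} (H : PairBound f c b δ) (hvb : v ≠ b)
    (hv : ∀ z, c v z ≠ 0 → z ≠ b ∧ 1 + δ ≤ f z) (hv1 : ∀ z, c v z ≤ 1)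
    (hsum : ∑ y, f y < 2 * m) :
    ∑ y, ∑ z, c y z
      ≤ 2 * (3 * m - 1) * (2 * m - 2) := by
  classical
  rcases Nat.even_or_odd' (3 * m) with ⟨k, hk | hk⟩
  · have := sum_le_of_matchings (W := Fin (3 * m)) k (by omega) (by simpa using hk) c
      (2 * m - 2) H.diag (by
        intro e
        have := H.sum_add_two_le k m e (e.symm b) (by simp)
          (by rw [Equiv.sum_comp e f]; exact hsum)
        omega)
    rwa [← hk] at this
  · set W := {y : Fin (3 * m) // y ≠ v}
    have hcard : Fintype.card W = 2 * k := by
      rw [Fintype.card_subtype_compl]; simp; omega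
    have h1 := sum_le_of_matchings (W := W) k (by omega) hcard (fun y z => c y z)
      (2 * m - 2) (fun y => H.diag y) (by
        intro e
        have := H.sum_add_two_le k m (fun q => e q) (e.symm ⟨b, hvb.symm⟩) (by simp)
          (by
            rw [Equiv.sum_comp e (fun y => f y)]
            refine lt_of_le_of_lt ?_ hsum
            have := Fintype.sum_subtype_add_sum_subtype (fun y => y ≠ v) f
            have h0 : 0 ≤ ∑ i : {x // ¬ (x ≠ v)}, f i := Finset.sum_nonneg fun i _ => H.nonneg _
            linarith)
        omega)
    -- The `z` with `c v z ≠ 0` weigh at least `1 + δ` each and differ from `b`, which weighs at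
    -- least `1 - δ`; two of these weights already add up to `2`.
    have hN : ∑ z, c v z + 2 ≤ 2 * m := by
      set Z := Finset.univ.filter (fun z => c v z ≠ 0) with hZ
      have hZc : ∑ z, c v z = Z.card := by
        rw [Finset.card_filter]
        refine Finset.sum_congr rfl fun z _ => ?_
        have := hv1 z
        split_ifs <;> omega
      have hb : b ∉ Z := by
        simp only [hZ, Finset.mem_filter, Finset.mem_univ, true_and]
        intro h
        exact (hv b h).1 rfl
      have h2 : (Z.card : ℝ) * (1 + δ) + (1 - δ) < 2 * m := by
        have h3 : ∑ z ∈ insert b Z, f z ≤ ∑ z, f z :=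
          Finset.sum_le_univ_sum_of_nonneg H.nonneg
        rw [Finset.sum_insert hb] at h3
        have h4 : (Z.card : ℝ) * (1 + δ) ≤ ∑ z ∈ Z, f z := by
          rw [← nsmul_eq_mul]
          exact Finset.card_nsmul_le_sum _ _ _ fun z hz =>
            (hv z (by simpa [hZ] using hz)).2
        have := H.base
        linarith
      rw [hZc]
      rcases Nat.eq_zero_or_pos Z.card with h | h
      · omega
      · have h5 : (1 : ℝ) ≤ Z.card := by exact_mod_cast h
        have h6 : ((Z.card + 1 : ℕ) : ℝ) < (2 * m : ℕ) := by
          push_cast; nlinarith [H.δ_nonneg]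
        have : Z.card + 1 < 2 * m := by exact_mod_cast h6
        omega
    have h3 : ∑ y, ∑ z, c y z = ∑ y : W, ∑ z : W, c y z + 2 * ∑ z, c v z := by
      have hsplit : ∀ F : Fin (3 * m) → ℕ, ∑ y, F y = F v + ∑ y : W, F y :=
        fun F => Fintype.sum_eq_add_sum_subtype_ne F v
      have h4 : ∑ y : W, c y v = ∑ z, c v z := by
        rw [hsplit (c v), H.diag, zero_add]
        exact Finset.sum_congr rfl fun y _ => H.symm _ _
      rw [hsplit (fun y => ∑ z, c y z)]
      simp only [fun y => hsplit (c y), Finset.sum_add_distrib] at *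
      rw [h4]
      ring
    rw [h3]
    have e1 : 3 * m - 1 = (2 * k - 1) + 1 := by omega
    have e2 : ∑ z, c v z ≤ 2 * m - 2 := by omega
    rw [e1]
    calc _ ≤ 2 * (2 * k - 1) * (2 * m - 2) + 2 * (2 * m - 2) := by gcongr
      _ = _ := by ring

/-! ### The weight argument for a single 3-graph -/

/-- Indicator of `{a, y, z}` being an edge of `G`. When all edges have three elements it vanishes
unless `a`, `y`, `z` are distinct. -/
def linkPair {V : Type*} [DecidableEq V] (G : Finset (Finset V)) (a y z : V) : ℕ :=
  if ({a, y, z} : Finset V) ∈ G then 1 else 0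

lemma two_mul_degree_le {V : Type*} [Fintype V] [DecidableEq V] (G : Finset (Finset V))
    (h3 : ∀ e ∈ G, e.card = 3) (a : V) :
    2 * (G.filter (fun e => a ∈ e)).card ≤ ∑ y, ∑ z, linkPair G a y z := by
  classical
  have h1 : ∑ y, ∑ z, linkPair G a y z
      = ((Finset.univ : Finset (V × V)).filter (fun p => ({a, p.1, p.2} : Finset V) ∈ G)).card := by
    rw [← Finset.sum_product', Finset.univ_product_univ, Finset.card_filter]
    rfl
  rw [h1, mul_comm]
  set P := (Finset.univ : Finset (V × V)).filter (fun p => ({a, p.1, p.2} : Finset V) ∈ G) with hP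
  rw [Finset.card_eq_sum_card_fiberwise (s := P) (t := G.filter (fun e => a ∈ e))
    (f := fun p => ({a, p.1, p.2} : Finset V))
    (by intro p hp; simpa [hP] using hp), ← smul_eq_mul]
  refine Finset.card_nsmul_le_sum _ _ _ fun e he => ?_
  obtain ⟨heG, hae⟩ := Finset.mem_filter.mp he
  obtain ⟨y, z, hyz, hyze⟩ := Finset.card_eq_two.mp
    (show (e.erase a).card = 2 by rw [Finset.card_erase_of_mem hae, h3 e heG])
  have hE : ({a, y, z} : Finset V) = e := by rw [← hyze, Finset.insert_erase hae]
  have hE' : ({a, z, y} : Finset V) = e := by rw [Finset.pair_comm, hE]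
  rw [← Finset.card_pair (show (y, z) ≠ (z, y) by simp [hyz])]
  refine Finset.card_le_card fun p hp => ?_
  rcases Finset.mem_insert.mp hp with rfl | hp
  · simp [hP, hE, heG]
  · rw [Finset.mem_singleton.mp hp]
    simp [hP, hE', heG]

lemma edge_props {V : Type*} [DecidableEq V] {G : Finset (Finset V)}
    (h3 : ∀ e ∈ G, e.card = 3) {x : V → ℝ} (hedge : ∀ e ∈ G, 1 ≤ ∑ i ∈ e, x i) {a y z : V}
    (h : ({a, y, z} : Finset V) ∈ G) : a ≠ y ∧ a ≠ z ∧ y ≠ z ∧ 1 ≤ x a + x y + x z := by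
  have hne : a ≠ y ∧ a ≠ z ∧ y ≠ z := by
    have hc := h3 _ h
    refine ⟨?_, ?_, ?_⟩ <;> rintro rfl
    · have := Finset.card_le_two (a := a) (b := z)
      simp at hc; omega
    · have := Finset.card_le_two (a := y) (b := a)
      rw [Finset.insert_eq_of_mem (by simp)] at hc; omega
    · have := Finset.card_le_two (a := a) (b := y)
      simp at hc; omega
  refine ⟨hne.1, hne.2.1, hne.2.2, ?_⟩
  have := hedge _ h
  rw [Finset.sum_insert (by simp [hne.1, hne.2.1]), Finset.sum_pair hne.2.2] at this
  linarith

/-- Under the degree-sum condition there is no fractional vertex cover of total weight below `m`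
in which some vertex has weight `0`. -/
lemma no_light_cover {m : ℕ} (hm : 2 ≤ m) (G : Finset (Finset (Fin (3 * m))))
    (h3 : ∀ e ∈ G, e.card = 3) (hcov : ∀ v, ∃ e ∈ G, v ∈ e)
    (hdeg : ∀ v b, v ≠ b → (∃ e ∈ G, v ∈ e ∧ b ∈ e) →
      (3 * m - 1) * (2 * m - 2) <
        (G.filter (fun e => v ∈ e)).card + (G.filter (fun e => b ∈ e)).card)
    (x : Fin (3 * m) → ℝ) (hx0 : ∀ i, 0 ≤ x i) (v : Fin (3 * m)) (hv : x v = 0)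
    (hedge : ∀ e ∈ G, 1 ≤ ∑ i ∈ e, x i) (hsum : ∑ i, x i < m) : False := by
  classical
  have hprop : ∀ {a y z}, ({a, y, z} : Finset (Fin (3 * m))) ∈ G →
      a ≠ y ∧ a ≠ z ∧ y ≠ z ∧ 1 ≤ x a + x y + x z := fun h => edge_props h3 hedge h
  have hsymm : ∀ a y z, linkPair G a y z = linkPair G a z y := by
    intro a y z; unfold linkPair; rw [Finset.pair_comm]
  have hself : ∀ a z, linkPair G a a z = 0 := by
    intro a z; unfold linkPair
    rw [if_neg]; intro h; exact (hprop h).1 rfl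
  have hdiag : ∀ a y, linkPair G a y y = 0 := by
    intro a y; unfold linkPair
    rw [if_neg]; intro h; exact (hprop h).2.2.1 rfl
  have hle1 : ∀ a y z, linkPair G a y z ≤ 1 := by
    intro a y z; unfold linkPair; split_ifs <;> simp
  have hmem : ∀ {a y z}, linkPair G a y z ≠ 0 → ({a, y, z} : Finset (Fin (3 * m))) ∈ G := by
    intro a y z h; unfold linkPair at h; by_contra hc; simp [hc] at h
  obtain ⟨b, hbN, hbmin⟩ : ∃ b, (v ≠ b ∧ ∃ e ∈ G, v ∈ e ∧ b ∈ e) ∧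
      ∀ b', (v ≠ b' ∧ ∃ e ∈ G, v ∈ e ∧ b' ∈ e) → x b ≤ x b' := by
    obtain ⟨e, he, hve⟩ := hcov v
    obtain ⟨b₀, hb₀, hne⟩ := Finset.exists_mem_ne (by rw [h3 e he]; simp) v
    obtain ⟨b, hb, hmin⟩ := Finset.exists_min_image
      (Finset.univ.filter fun b => v ≠ b ∧ ∃ e ∈ G, v ∈ e ∧ b ∈ e) x
      ⟨b₀, by simpa using ⟨hne.symm, e, he, hve, hb₀⟩⟩
    exact ⟨b, by simpa using hb, fun b' hb' => hmin b' (by simpa using hb')⟩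
  have hvb := hbN.1
  have hD := hdeg v b hvb hbN.2
  have hdv := two_mul_degree_le G h3 v
  have hdb := two_mul_degree_le G h3 b
  have hadj : ∀ {y z}, ({v, y, z} : Finset (Fin (3 * m))) ∈ G → x b ≤ x y ∧ x b ≤ x z := by
    intro y z h
    obtain ⟨h1, h2, -⟩ := hprop h
    exact ⟨hbmin y ⟨h1, _, h, by simp, by simp⟩, hbmin z ⟨h2, _, h, by simp, by simp⟩⟩
  set c : Fin (3 * m) → Fin (3 * m) → ℕ := fun y z => linkPair G v y z + linkPair G b y z with hc
  have hcsum : ∑ y, ∑ z, c y z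
      = ∑ y, ∑ z, linkPair G v y z + ∑ y, ∑ z, linkPair G b y z := by
    simp only [hc, Finset.sum_add_distrib]
  -- Each of the two uses of the matching bound amounts to a choice of `f` and `δ`.
  have main : ∀ (f : Fin (3 * m) → ℝ) (δ : ℝ), (∀ y, 0 ≤ f y) → 0 ≤ δ → δ ≤ 1 → 1 - δ ≤ f b →
      (∀ y z, ({v, y, z} : Finset (Fin (3 * m))) ∈ G → 2 ≤ f y + f z) →
      (∀ y z, ({b, y, z} : Finset (Fin (3 * m))) ∈ G → 1 + δ ≤ f y + f z) →
      (∀ z, ({b, v, z} : Finset (Fin (3 * m))) ∈ G → 1 + δ ≤ f z) →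
      ∑ y, f y < 2 * m → False := by
    intro f δ hf0 hδ0 hδ1 hfb hfv hfb2 hfbv hfs
    have H : PairBound f c b δ :=
      { nonneg := hf0
        δ_nonneg := hδ0
        symm := fun y z => by simp only [hc, hsymm _ y z]
        diag := fun y => by simp only [hc, hdiag]
        le_two := fun y z => by have := hle1 v y z; have := hle1 b y z; simp only [hc]; omega
        two := fun y z h => by
          have := hle1 v y z; have := hle1 b y z; simp only [hc] at h
          exact hfv y z (hmem (by omega))
        one := fun y z h => by
          simp only [hc] at h
          by_cases h0 : linkPair G v y z = 0
          · exact hfb2 y z (hmem (by omega))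
          · have := hfv y z (hmem h0); linarith
        base := hfb
        base_one := fun z h => by
          simp only [hc, hself] at h
          exact hfv b z (hmem (by omega))
        base_le := fun z => by simp only [hc, hself]; exact hle1 _ _ _ }
    have := H.sum_le hm hvb (fun z h => by
        simp only [hc, hself, zero_add] at h
        exact ⟨(hprop (hmem h)).2.1.symm, hfbv z (hmem h)⟩)
      (fun z => by simp only [hc, hself, zero_add]; exact hle1 _ _ _) hfs
    have e1 : 2 * (3 * m - 1) * (2 * m - 2) = 2 * ((3 * m - 1) * (2 * m - 2)) := by ring
    omega
  by_cases hβ : x b ≤ 1 / 2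
  · refine main (fun y => 2 * x y) (1 - 2 * x b) (fun y => by have := hx0 y; positivity)
      (by linarith) (by have := hx0 b; linarith) (by linarith) ?_ ?_ ?_ ?_
    · intro y z h; have := (hprop h).2.2.2; linarith
    · intro y z h; have := (hprop h).2.2.2; linarith
    · intro z h; have := (hprop h).2.2.2; linarith
    · rw [← Finset.mul_sum]; linarith
  · push Not at hβ
    set B := Finset.univ.filter (fun y => x b ≤ x y) with hB
    have hsplit : (B.card : ℝ) * x b + ∑ y ∈ Finset.univ.filter (fun y => ¬ x b ≤ x y), x y < m := by
      have h1 := Finset.sum_filter_add_sum_filter_not Finset.univ (fun y => x b ≤ x y) x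
      have h2 : (B.card : ℝ) * x b ≤ ∑ y ∈ B, x y := by
        rw [← nsmul_eq_mul]
        exact Finset.card_nsmul_le_sum _ _ _ fun z hz => by simpa [hB] using hz
      linarith
    have hrest : 0 ≤ ∑ y ∈ Finset.univ.filter (fun y => ¬ x b ≤ x y), x y :=
      Finset.sum_nonneg fun i _ => hx0 i
    by_cases hN : m ≤ B.card
    · have hN' : (m : ℝ) ≤ B.card := by exact_mod_cast hN
      have hm' : (2 : ℝ) ≤ m := by exact_mod_cast hm
      have hβ1 : x b < 1 := by nlinarith
      have hpos : 0 < 1 - x b := by linarith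
      set f : Fin (3 * m) → ℝ := fun y => if x b ≤ x y then 1 else x y / (1 - x b) with hf
      have hf0 : ∀ y, 0 ≤ f y := by
        intro y; simp only [hf]; split_ifs
        · simp
        · exact div_nonneg (hx0 y) hpos.le
      have hf1 : ∀ y, x b ≤ x y → f y = 1 := fun y h => by simp only [hf, if_pos h]
      refine main f 0 hf0 le_rfl zero_le_one (by rw [hf1 b le_rfl]; simp) ?_ ?_ ?_ ?_
      · intro y z h
        rw [hf1 y (hadj h).1, hf1 z (hadj h).2]; norm_num
      · intro y z h
        by_cases hy : x b ≤ x y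
        · rw [hf1 y hy]; have := hf0 z; linarith
        · by_cases hz : x b ≤ x z
          · rw [hf1 z hz]; have := hf0 y; linarith
          · simp only [hf, if_neg hy, if_neg hz]
            rw [← add_div, le_div_iff₀ hpos]
            have := (hprop h).2.2.2; linarith
      · intro z h
        rw [Finset.insert_comm] at h
        rw [hf1 z (hadj h).2]; simp
      · have h1 : ∑ y, f y
            = B.card + (∑ y ∈ Finset.univ.filter (fun y => ¬ x b ≤ x y), x y) / (1 - x b) := by
          simp only [hf]
          rw [Finset.sum_ite, Finset.sum_div]
          simp [hB]
        rw [h1, ← lt_sub_iff_add_lt', div_lt_iff₀ hpos]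
        -- As `x b > 1/2`, `|B| (1 - 2 x b) ≤ m (1 - 2 x b)`.
        nlinarith
    · push Not at hN
      have h1 : ∑ y, ∑ z, linkPair G v y z ≤ B.offDiag.card := by
        rw [← Finset.sum_product', Finset.univ_product_univ]
        simp only [linkPair]
        rw [← Finset.card_filter]
        refine Finset.card_le_card fun p hp => ?_
        have hp : ({v, p.1, p.2} : Finset (Fin (3 * m))) ∈ G := by simpa using hp
        simp only [Finset.mem_offDiag, hB, Finset.mem_filter, Finset.mem_univ, true_and]
        exact ⟨(hadj hp).1, (hadj hp).2, (hprop hp).2.2.1⟩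
      have h2 : ∑ y, ∑ z, linkPair G b y z ≤ (Finset.univ.erase b).offDiag.card := by
        rw [← Finset.sum_product', Finset.univ_product_univ]
        simp only [linkPair]
        rw [← Finset.card_filter]
        refine Finset.card_le_card fun p hp => ?_
        have hp : ({b, p.1, p.2} : Finset (Fin (3 * m))) ∈ G := by simpa using hp
        obtain ⟨h1, h2, h3, -⟩ := hprop hp
        simp only [Finset.mem_offDiag, Finset.mem_erase, Finset.mem_univ, and_true]
        exact ⟨h1.symm, h2.symm, h3⟩
      rw [Finset.offDiag_card] at h1 h2
      rw [Finset.card_erase_of_mem (Finset.mem_univ _), Finset.card_univ, Fintype.card_fin] at h2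
      have h4 : B.card * B.card - B.card ≤ (m - 1) * (m - 2) := by
        rw [← Nat.mul_sub_one]
        exact Nat.mul_le_mul (by omega) (by omega)
      have h5 : 2 * ((3 * m - 1) * (2 * m - 2))
          < (m - 1) * (m - 2) + ((3 * m - 1) * (3 * m - 1) - (3 * m - 1)) := by omega
      obtain ⟨r, rfl⟩ : ∃ r, m = r + 2 := ⟨m - 2, by omega⟩
      have a1 : 3 * (r + 2) - 1 = 3 * r + 5 := by omega
      have a2 : 2 * (r + 2) - 2 = 2 * r + 2 := by omega
      have a3 : r + 2 - 1 = r + 1 := by omega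
      have a4 : r + 2 - 2 = r := by omega
      have a5 : (3 * r + 5) * (3 * r + 5) - (3 * r + 5) = (3 * r + 5) * (3 * r + 4) := by
        rw [← Nat.mul_sub_one]; rfl
      rw [a1, a2, a3, a4, a5] at h5
      nlinarith

/-! ### Duality and assembly -/

/-- A fractional perfect matching of the 3-graph `G`, scaled to have total weight `1`. -/
lemma exists_fractional_perfect_matching {m : ℕ} (hm : 2 ≤ m) (G : Finset (Finset (Fin (3 * m))))
    (h3 : ∀ e ∈ G, e.card = 3) (hcov : ∀ v, ∃ e ∈ G, v ∈ e)
    (hdeg : ∀ v b, v ≠ b → (∃ e ∈ G, v ∈ e ∧ b ∈ e) →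
      (3 * m - 1) * (2 * m - 2) <
        (G.filter (fun e => v ∈ e)).card + (G.filter (fun e => b ∈ e)).card) :
    ∃ w : Finset (Fin (3 * m)) → ℝ, (∀ e, 0 ≤ w e) ∧ (∀ e ∉ G, w e = 0) ∧
      ∑ e ∈ G, w e = 1 ∧ ∀ v, ∑ e ∈ G.filter (fun e => v ∈ e), w e = 1 / m := by
  classical
  have hm0 : (0 : ℝ) < m := by exact_mod_cast (by omega : 0 < m)
  set ind : Finset (Fin (3 * m)) → (Fin (3 * m) → ℝ) := fun e i => if i ∈ e then 1 else 0 with hind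
  have hinj : Function.Injective ind := by
    intro e e' h
    ext i
    have := congrFun h i
    by_cases h1 : i ∈ e <;> by_cases h2 : i ∈ e' <;> simp_all
  have hp : (fun _ => 1 / (m : ℝ)) ∈ convexHull ℝ
      ((G.image ind : Finset _) : Set (Fin (3 * m) → ℝ)) := by
    by_contra hp
    obtain ⟨φ, u, hφp, hφ⟩ := geometric_hahn_banach_point_closed
      (convex_convexHull ℝ ((G.image ind : Finset _) : Set (Fin (3 * m) → ℝ)))
      ((G.image ind).finite_toSet.isClosed_convexHull ℝ) hp
    set ξ : Fin (3 * m) → ℝ := fun i => φ (Pi.single i 1) with hξ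
    have hφsum : ∀ y : Fin (3 * m) → ℝ, φ y = ∑ i, y i * ξ i := by
      intro y
      conv_lhs => rw [← Finset.univ_sum_single y]
      rw [map_sum]
      refine Finset.sum_congr rfl fun i _ => ?_
      have : Pi.single i (y i) = y i • (Pi.single i 1 : Fin (3 * m) → ℝ) := by
        rw [← Pi.single_smul, smul_eq_mul, mul_one]
      rw [this, map_smul, smul_eq_mul]
    have hS : (∑ i, ξ i) / m < u := by
      rw [hφsum, ← Finset.mul_sum] at hφp
      rwa [div_eq_inv_mul, ← one_div]
    have hE : ∀ e ∈ G, u < ∑ i ∈ e, ξ i := by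
      intro e he
      have := hφ (ind e) (subset_convexHull ℝ _ (by simpa using ⟨e, he, rfl⟩))
      rw [hφsum] at this
      simpa [hind, Finset.sum_ite_mem] using this
    have : Nonempty (Fin (3 * m)) := ⟨⟨0, by omega⟩⟩
    obtain ⟨v, hv⟩ := Finite.exists_min ξ
    have hSum : (3 * m : ℝ) * ξ v ≤ ∑ i, ξ i := by
      have := Finset.card_nsmul_le_sum Finset.univ ξ (ξ v) fun i _ => hv i
      simpa [nsmul_eq_mul] using this
    have hS' : ∑ i, ξ i < u * m := by rwa [div_lt_iff₀ hm0] at hS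
    have hμ : 0 < u - 3 * ξ v := by
      have : 0 < m * (u - 3 * ξ v) := by nlinarith
      exact pos_of_mul_pos_right this hm0.le
    -- Shift the least weight to `0` and rescale the separation constant to `1`.
    refine no_light_cover hm G h3 hcov hdeg (fun i => (ξ i - ξ v) / (u - 3 * ξ v))
      (fun i => div_nonneg (sub_nonneg.mpr (hv i)) hμ.le) v (by simp) ?_ ?_
    · intro e he
      rw [← Finset.sum_div, le_div_iff₀ hμ, Finset.sum_sub_distrib, Finset.sum_const, h3 e he]
      have := hE e he
      simp only [nsmul_eq_mul]; push_cast; linarith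
    · rw [← Finset.sum_div, div_lt_iff₀ hμ, Finset.sum_sub_distrib, Finset.sum_const,
        Finset.card_univ, Fintype.card_fin]
      simp only [nsmul_eq_mul]; push_cast; linarith
  obtain ⟨w, hw0, hw1, hws⟩ := Finset.mem_convexHull'.mp hp
  rw [Finset.sum_image hinj.injOn] at hw1 hws
  refine ⟨fun e => if e ∈ G then w (ind e) else 0, ?_, ?_, ?_, ?_⟩
  · intro e
    dsimp only
    split_ifs with h
    · exact hw0 _ (Finset.mem_image_of_mem _ h)
    · exact le_rfl
  · intro e he; simp [he]
  · rw [← hw1]; exact Finset.sum_congr rfl fun e he => by simp [he]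
  · intro v
    have := congrFun hws v
    rw [Finset.sum_apply] at this
    rw [← this, Finset.sum_filter]
    refine Finset.sum_congr rfl fun e he => ?_
    simp [hind, he]

/-- **Fractional perfect matching.** There exists `n₀` such that
for all `n ≥ n₀` divisible by 3: if `H` is a `(1,3)`-partite 4-graph with
classes `Q = Fin (n/3)`, `P = Fin n` (encoded as pairs `(u, s)`, `|s| = 3`),
every vertex of `Q` is adjacent to every vertex of `P`, and
`deg({u,v}) + deg({u,v'}) > (2/3)n² - (8/3)n + 2` whenever `deg({u,v,v'}) > 0`,
then `H` has a fractional perfect matching. -/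
theorem stmt_11 :
    ∃ n₀ : ℕ, ∀ n : ℕ, n₀ ≤ n → 3 ∣ n →
    ∀ H : Finset (Fin (n / 3) × Finset (Fin n)),
      (∀ p ∈ H, p.2.card = 3) →
      (∀ u : Fin (n / 3), ∀ v : Fin n, ∃ p ∈ H, p.1 = u ∧ v ∈ p.2) →
      (∀ u : Fin (n / 3), ∀ v v' : Fin n, v ≠ v' →
        0 < (H.filter (fun p => p.1 = u ∧ v ∈ p.2 ∧ v' ∈ p.2)).card →
        (((H.filter (fun p => p.1 = u ∧ v ∈ p.2)).card
          + (H.filter (fun p => p.1 = u ∧ v' ∈ p.2)).card : ℝ)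
            > (2 / 3) * (n : ℝ) ^ 2 - (8 / 3) * (n : ℝ) + 2)) →
      ∃ w : Fin (n / 3) × Finset (Fin n) → ℝ,
        (∀ p, 0 ≤ w p ∧ w p ≤ 1) ∧ (∀ p ∉ H, w p = 0) ∧
        (∀ u : Fin (n / 3), ∑ p ∈ H.filter (fun p => p.1 = u), w p = 1) ∧
        (∀ v : Fin n, ∑ p ∈ H.filter (fun p => v ∈ p.2), w p = 1) := by
  refine ⟨6, ?_⟩
  rintro n hn ⟨m, rfl⟩ H h3 hcov hdeg
  have hm : 2 ≤ m := by omega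
  have hm0 : (m : ℝ) ≠ 0 := by exact_mod_cast (by omega : m ≠ 0)
  set G : Fin (3 * m / 3) → Finset (Finset (Fin (3 * m))) :=
    fun u => Finset.univ.filter (fun s => (u, s) ∈ H) with hG
  have hGdeg : ∀ u v, (H.filter (fun p => p.1 = u ∧ v ∈ p.2)).card
      = ((G u).filter (fun e => v ∈ e)).card := by
    intro u v
    refine Finset.card_nbij' Prod.snd (fun s => (u, s)) ?_ ?_ ?_ ?_
    · rintro ⟨u', s⟩ hp
      simp only [Finset.coe_filter, Set.mem_ofPred_eq] at hp
      obtain ⟨hp, rfl, hv⟩ := hp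
      simp [hG, hp, hv]
    · intro s hs
      simpa [hG] using hs
    · rintro ⟨u', s⟩ hp
      simp only [Finset.coe_filter, Set.mem_ofPred_eq] at hp
      rw [hp.2.1]
    · intro s _; rfl
  have key : ∀ u, ∃ w : Finset (Fin (3 * m)) → ℝ, (∀ e, 0 ≤ w e) ∧ (∀ e ∉ G u, w e = 0) ∧
      ∑ e ∈ G u, w e = 1 ∧ ∀ v, ∑ e ∈ (G u).filter (fun e => v ∈ e), w e = 1 / m := by
    intro u
    refine exists_fractional_perfect_matching hm (G u) ?_ ?_ ?_
    · intro e he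
      exact h3 (u, e) (by simpa [hG] using he)
    · intro v
      obtain ⟨⟨u', e⟩, hp, rfl, hv⟩ := hcov u v
      exact ⟨e, by simpa [hG] using hp, hv⟩
    · rintro v b hvb ⟨e, he, hve, hbe⟩
      have h := hdeg u v b hvb (Finset.card_pos.mpr
        ⟨(u, e), by simpa [hG, hve, hbe] using he⟩)
      rw [hGdeg, hGdeg] at h
      have h2 : (((3 * m - 1) * (2 * m - 2) : ℕ) : ℝ) <
          (((G u).filter (fun e => v ∈ e)).card + ((G u).filter (fun e => b ∈ e)).card : ℕ) := by
        rw [Nat.cast_mul, Nat.cast_sub (by omega), Nat.cast_sub (by omega)]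
        push_cast at h ⊢
        linarith
      exact_mod_cast h2
  choose w hw0 hwG hw1 hwv using key
  have hfib : ∀ (P : Fin (3 * m / 3) × Finset (Fin (3 * m)) → Prop) [DecidablePred P],
      ∑ p ∈ H.filter P, w p.1 p.2
        = ∑ u, ∑ e ∈ (G u).filter (fun e => P (u, e)), w u e := by
    intro P _
    have : H.filter P = Finset.univ.filter (fun p => p ∈ H ∧ P p) := by ext; simp
    rw [this, Finset.sum_filter, Fintype.sum_prod_type]
    refine Finset.sum_congr rfl fun u _ => ?_
    simp only [hG, Finset.filter_filter]
    rw [Finset.sum_filter]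
  refine ⟨fun p => w p.1 p.2, fun p => ⟨hw0 _ _, ?_⟩, ?_, ?_, ?_⟩
  · by_cases hp : p.2 ∈ G p.1
    · rw [← hw1 p.1]
      exact Finset.single_le_sum (fun e _ => hw0 p.1 e) hp
    · simp [hwG _ _ hp]
  · intro p hp
    exact hwG _ _ (by simpa [hG] using hp)
  · intro u
    rw [hfib, Finset.sum_eq_single u]
    · simpa using hw1 u
    · intro u' _ hne
      simp [hne]
    · simp
  · intro v
    rw [hfib]
    simp only [hwv]
    simp [hm0]
end

section
/- Let H be a (1,3)-partite 4-graph with partition classes Q and P, let p be a minimum fractional vertex cover of H, and let H′ be the (1,3)-partite 4-graph on V(H) whose edges are all 4-sets e with |e ∩ Q| = 1, |e ∩ P| = 3 and Σ_{v ∈ e} p(v) ≥ 1. Then for every 4-graph H″ with V(H″) = V(H) and E(H) ⊆ E(H″) ⊆ E(H′), the fractional matching numbers satisfy ν*(H) = ν*(H″). In particular, H″ has a fractional perfect matching if and only if H has one. -/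
/-!
The theorem is linear programming duality. If `p` is a minimum fractional vertex cover of `H`,
strong duality (`exists_matching_eq_cover`) gives a fractional matching `w` of `H` whose weight
is the weight of `p`. By definition of `H'`, `p` also covers `H''`, and `w` is a fractional
matching of `H''`; by weak duality (`matching_le_cover`) both fractional matching numbers equal
the weight of `p`. If moreover `H''` has a fractional perfect matching `z`, then `w` is at least as
heavy as `z`, so its weight is `m` with `n = 3 * m`, and no vertex of `w` can have degree below `1`
(`isFracPM_of_sum_eq`).

Strong duality is derived for an arbitrary finite hypergraph from Sion's minimax theorem, applied
to the Lagrangian `∑ y + ∑ w - ∑_i ∑_{v ∈ e i} w i * y v` on the product of the unit cubes.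
Restricting both arguments to cubes costs nothing: edges that `y` fails to cover can be repaired by
adding their deficit to a vertex (`le_lagr_of_le_cover`), and vertices overloaded by `w` can be
repaired by scaling down the edges through them (`exists_matching_of_le_lagr`).
-/

/-- A fractional matching of a `(1,3)`-partite 4-graph `H` (encoded as pairs
`(u, s)` with `u : Fin m` in class `Q` and `s ⊆ Fin n` in class `P`):
`w : E → [0,1]`, supported on `H`, with total weight at most 1 at every vertex. -/
def IsFracMatching (m n : ℕ) (H : Finset (Fin m × Finset (Fin n)))
    (w : Fin m × Finset (Fin n) → ℝ) : Prop :=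
  (∀ p, 0 ≤ w p ∧ w p ≤ 1) ∧ (∀ p ∉ H, w p = 0) ∧
  (∀ u : Fin m, ∑ p ∈ H.filter (fun p => p.1 = u), w p ≤ 1) ∧
  (∀ v : Fin n, ∑ p ∈ H.filter (fun p => v ∈ p.2), w p ≤ 1)

/-- A fractional perfect matching: total weight exactly 1 at every vertex. -/
def IsFracPM (m n : ℕ) (H : Finset (Fin m × Finset (Fin n)))
    (w : Fin m × Finset (Fin n) → ℝ) : Prop :=
  (∀ p, 0 ≤ w p ∧ w p ≤ 1) ∧ (∀ p ∉ H, w p = 0) ∧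
  (∀ u : Fin m, ∑ p ∈ H.filter (fun p => p.1 = u), w p = 1) ∧
  (∀ v : Fin n, ∑ p ∈ H.filter (fun p => v ∈ p.2), w p = 1)

/-- The fractional matching number `ν*(H)`. -/
noncomputable def nuStar (m n : ℕ) (H : Finset (Fin m × Finset (Fin n))) : ℝ :=
  sSup {x : ℝ | ∃ w, IsFracMatching m n H w ∧ ∑ p ∈ H, w p = x}

/-- A fractional vertex cover of `H`: `p : V → [0,1]` (given on the two classes by
`pQ`, `pP`) with total value at least 1 on every edge. -/
def IsFracCover (m n : ℕ) (H : Finset (Fin m × Finset (Fin n)))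
    (pQ : Fin m → ℝ) (pP : Fin n → ℝ) : Prop :=
  (∀ u, 0 ≤ pQ u ∧ pQ u ≤ 1) ∧ (∀ v, 0 ≤ pP v ∧ pP v ≤ 1) ∧
  (∀ p ∈ H, 1 ≤ pQ p.1 + ∑ v ∈ p.2, pP v)

/-! ### Strong duality for finite hypergraphs -/

/-- The Lagrangian `∑ y + ∑ w - ∑_i ∑_{v ∈ e i} w i * y v` of the fractional matching linear
program of the hypergraph with edges `e i`. -/
noncomputable def lagr {V E : Type*} [Fintype V] [Fintype E] (e : E → Finset V)
    (y : V → ℝ) (w : E → ℝ) : ℝ :=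
  ∑ v, y v + ∑ i, w i - ∑ i, ∑ v ∈ e i, w i * y v

lemma lagr_affine_left {V E : Type*} [Fintype V] [Fintype E] (e : E → Finset V)
    (y y' : V → ℝ) (w : E → ℝ) (s t : ℝ) (hst : s + t = 1) :
    lagr e (s • y + t • y') w = s * lagr e y w + t * lagr e y' w := by
  have h : ∑ i, w i = s * ∑ i, w i + t * ∑ i, w i := by rw [← add_mul, hst, one_mul]
  have h2 : ∑ i, ∑ v ∈ e i, w i * (s * y v + t * y' v)
      = s * (∑ i, ∑ v ∈ e i, w i * y v) + t * ∑ i, ∑ v ∈ e i, w i * y' v := by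
    simp only [Finset.mul_sum, ← Finset.sum_add_distrib]
    refine Finset.sum_congr rfl fun i _ => Finset.sum_congr rfl fun v _ => by ring
  simp only [lagr, Pi.add_apply, Pi.smul_apply, smul_eq_mul, h2]
  rw [Finset.sum_add_distrib, ← Finset.mul_sum, ← Finset.mul_sum]
  linear_combination h

lemma lagr_affine_right {V E : Type*} [Fintype V] [Fintype E] (e : E → Finset V)
    (y : V → ℝ) (w w' : E → ℝ) (s t : ℝ) (hst : s + t = 1) :
    lagr e y (s • w + t • w') = s * lagr e y w + t * lagr e y w' := by
  have h : ∑ i, y i = s * ∑ i, y i + t * ∑ i, y i := by rw [← add_mul, hst, one_mul]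
  have h2 : ∑ i, ∑ v ∈ e i, (s * w i + t * w' i) * y v
      = s * (∑ i, ∑ v ∈ e i, w i * y v) + t * ∑ i, ∑ v ∈ e i, w' i * y v := by
    simp only [Finset.mul_sum, ← Finset.sum_add_distrib]
    refine Finset.sum_congr rfl fun i _ => Finset.sum_congr rfl fun v _ => by ring
  simp only [lagr, Pi.add_apply, Pi.smul_apply, smul_eq_mul, h2]
  rw [Finset.sum_add_distrib, ← Finset.mul_sum, ← Finset.mul_sum]
  linear_combination h

/-- Minimax for the Lagrangian on the two unit cubes. -/
lemma lagr_saddle {V E : Type*} [Fintype V] [Fintype E] (e : E → Finset V) :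
    ∃ a ∈ Set.Icc (0 : V → ℝ) 1, ∃ b ∈ Set.Icc (0 : E → ℝ) 1,
      ∀ y ∈ Set.Icc (0 : V → ℝ) 1, ∀ w ∈ Set.Icc (0 : E → ℝ) 1, lagr e a w ≤ lagr e y b := by
  have hs := Sion.exists_isSaddlePointOn (X := Set.Icc (0 : V → ℝ) 1)
    (Y := Set.Icc (0 : E → ℝ) 1) (f := lagr e)
    ⟨0, by simp⟩ (convex_Icc _ _) isCompact_Icc
    (fun w _ => Continuous.lowerSemicontinuous
      (by unfold lagr; fun_prop) |>.lowerSemicontinuousOn _)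
    (fun w _ => ConvexOn.quasiconvexOn ⟨convex_Icc _ _, fun y _ y' _ s t _ _ hst => by
      simp only [lagr_affine_left e y y' w s t hst, smul_eq_mul, le_refl]⟩)
    (convex_Icc _ _) ⟨0, by simp⟩ isCompact_Icc
    (fun y _ => Continuous.upperSemicontinuous
      (by unfold lagr; fun_prop) |>.upperSemicontinuousOn _)
    (fun y _ => ConcaveOn.quasiconcaveOn ⟨convex_Icc _ _, fun w _ w' _ s t _ _ hst => by
      simp only [lagr_affine_right e y w w' s t hst, smul_eq_mul, le_refl]⟩)
  obtain ⟨a, ha, b, hb, h⟩ := hs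
  exact ⟨a, ha, b, hb, fun y hy w hw => h y hy w hw⟩

/-- Adding the deficit of each edge to one of its vertices turns any `y : V → [0,1]` into a cover.
Hence a lower bound for all covers also bounds `∑ y` plus the total deficit, which is the value
of the Lagrangian at the indicator of the deficient edges. -/
lemma le_lagr_of_le_cover {V E : Type*} [Fintype V] [Fintype E] (e : E → Finset V)
    (hne : ∀ i, (e i).Nonempty) (τ : ℝ)
    (hτ : ∀ y ∈ Set.Icc (0 : V → ℝ) 1, (∀ i, 1 ≤ ∑ v ∈ e i, y v) → τ ≤ ∑ v, y v)
    (a : V → ℝ) (ha : a ∈ Set.Icc (0 : V → ℝ) 1) :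
    ∃ w ∈ Set.Icc (0 : E → ℝ) 1, τ ≤ lagr e a w := by
  classical
  choose c hc using hne
  let d : E → ℝ := fun i => max 0 (1 - ∑ v ∈ e i, a v)
  have hd0 : ∀ i, 0 ≤ d i := fun i => le_max_left _ _
  have hd1 : ∀ i, 1 - ∑ v ∈ e i, a v ≤ d i := fun i => le_max_right _ _
  have ha0 : ∀ v, 0 ≤ a v := fun v => ha.1 v
  have ha1 : ∀ v, a v ≤ 1 := fun v => ha.2 v
  let y : V → ℝ := fun v => min 1 (a v + ∑ i with c i = v, d i)
  have hay : ∀ v, a v ≤ y v := fun v =>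
    le_min (ha1 v) (le_add_of_nonneg_right (Finset.sum_nonneg fun i _ => hd0 i))
  have hy0 : ∀ v, 0 ≤ y v := fun v => (ha0 v).trans (hay v)
  have hcov : ∀ i, 1 ≤ ∑ v ∈ e i, y v := by
    intro i
    rcases le_total 1 (a (c i) + ∑ j with c j = c i, d j) with h | h
    · have : y (c i) = 1 := min_eq_left h
      rw [← this]
      exact Finset.single_le_sum (fun v _ => hy0 v) (hc i)
    · have h1 : y (c i) = a (c i) + ∑ j with c j = c i, d j := min_eq_right h
      have h2 : d i ≤ ∑ j with c j = c i, d j :=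
        Finset.single_le_sum (f := d) (fun j _ => hd0 j) (by simp)
      have h3 := Finset.add_sum_erase (e i) y (hc i)
      have h4 := Finset.add_sum_erase (e i) a (hc i)
      have h5 : ∑ v ∈ (e i).erase (c i), a v ≤ ∑ v ∈ (e i).erase (c i), y v :=
        Finset.sum_le_sum fun v _ => hay v
      linarith [hd1 i]
  have h1 := hτ y ⟨hy0, fun v => min_le_left _ _⟩ hcov
  have h2 : ∑ v, y v ≤ ∑ v, (a v + ∑ i with c i = v, d i) :=
    Finset.sum_le_sum fun v _ => min_le_right _ _
  have h3 : ∑ v, ∑ i with c i = v, d i = ∑ i, d i := by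
    convert Finset.sum_fiberwise Finset.univ c d
  rw [Finset.sum_add_distrib, h3] at h2
  refine ⟨fun i => if ∑ v ∈ e i, a v < 1 then 1 else 0,
    ⟨fun i => by dsimp; split_ifs <;> norm_num, fun i => by dsimp; split_ifs <;> norm_num⟩, ?_⟩
  refine (h1.trans h2).trans_eq ?_
  unfold lagr
  rw [add_sub_assoc, ← Finset.sum_sub_distrib]
  congr 1
  refine Finset.sum_congr rfl fun i _ => ?_
  rw [← Finset.mul_sum]
  simp only [d]
  split_ifs with h
  · rw [max_eq_right (by linarith)]; ring
  · rw [max_eq_left (by linarith)]; ring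

lemma one_sub_sum_le_prod {V : Type*} (s : Finset V) (c : V → ℝ) (h0 : ∀ v, 0 ≤ c v)
    (h1 : ∀ v, c v ≤ 1) : 1 - ∑ v ∈ s, (1 - c v) ≤ ∏ v ∈ s, c v := by
  classical
  induction s using Finset.induction_on with
  | empty => simp
  | insert a s ha ih =>
    rw [Finset.sum_insert ha, Finset.prod_insert ha]
    have hp : ∏ v ∈ s, c v ≤ 1 := Finset.prod_le_one (fun v _ => h0 v) (fun v _ => h1 v)
    nlinarith [h0 a, h1 a]

/-- Scaling every edge weight by `1 / max 1 (deg v)` for each of its vertices turns a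
`b : E → [0,1]` into a fractional matching, and the weight lost is at most the total excess of
degrees over `1`.  So the matching weighs at least the value of the Lagrangian at the indicator
of the overloaded vertices. -/
lemma exists_matching_of_le_lagr {V E : Type*} [Fintype V] [DecidableEq V] [Fintype E]
    (e : E → Finset V) (τ : ℝ) (b : E → ℝ) (hb : b ∈ Set.Icc (0 : E → ℝ) 1)
    (hτ : ∀ y ∈ Set.Icc (0 : V → ℝ) 1, τ ≤ lagr e y b) :
    ∃ w : E → ℝ, (∀ i, 0 ≤ w i ∧ w i ≤ 1) ∧ (∀ v, ∑ i with v ∈ e i, w i ≤ 1) ∧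
      τ ≤ ∑ i, w i := by
  have hb0 : ∀ i, 0 ≤ b i := fun i => hb.1 i
  have hb1 : ∀ i, b i ≤ 1 := fun i => hb.2 i
  let deg : V → ℝ := fun v => ∑ i with v ∈ e i, b i
  let c : V → ℝ := fun v => (max 1 (deg v))⁻¹
  have hm : ∀ v, 1 ≤ max 1 (deg v) := fun v => le_max_left _ _
  have hc0 : ∀ v, 0 ≤ c v := fun v => inv_nonneg.2 (zero_le_one.trans (hm v))
  have hc1 : ∀ v, c v ≤ 1 := fun v => inv_le_one_of_one_le₀ (hm v)
  have hswap : ∀ g : V → ℝ, ∑ i, ∑ v ∈ e i, b i * g v = ∑ v, deg v * g v := by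
    intro g
    simp only [deg, Finset.sum_mul]
    exact Finset.sum_comm' (by simp)
  refine ⟨fun i => b i * ∏ v ∈ e i, c v, fun i => ⟨?_, ?_⟩, fun v => ?_, ?_⟩
  · exact mul_nonneg (hb0 i) (Finset.prod_nonneg fun v _ => hc0 v)
  · exact mul_le_one₀ (hb1 i) (Finset.prod_nonneg fun v _ => hc0 v)
      (Finset.prod_le_one (fun v _ => hc0 v) (fun v _ => hc1 v))
  · calc ∑ i with v ∈ e i, b i * ∏ u ∈ e i, c u ≤ ∑ i with v ∈ e i, b i * c v := by
          refine Finset.sum_le_sum fun i hi => mul_le_mul_of_nonneg_left ?_ (hb0 i)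
          rw [Finset.mem_filter] at hi
          rw [← Finset.mul_prod_erase _ _ hi.2]
          exact mul_le_of_le_one_right (hc0 v)
            (Finset.prod_le_one (fun v _ => hc0 v) (fun v _ => hc1 v))
      _ = deg v * c v := by rw [← Finset.sum_mul]
      _ ≤ 1 := by
          rw [← div_eq_mul_inv, div_le_one (zero_lt_one.trans_le (hm v))]
          exact le_max_right _ _
  · have h1 : ∑ i, (b i - ∑ v ∈ e i, b i * (1 - c v)) ≤ ∑ i, b i * ∏ v ∈ e i, c v := by
      refine Finset.sum_le_sum fun i _ => ?_
      rw [← Finset.mul_sum]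
      nlinarith [one_sub_sum_le_prod (e i) c hc0 hc1, hb0 i]
    refine le_trans ?_ h1
    rw [Finset.sum_sub_distrib, hswap]
    refine (hτ (fun v => if 1 < deg v then 1 else 0)
      ⟨fun i => by dsimp; split_ifs <;> norm_num,
        fun i => by dsimp; split_ifs <;> norm_num⟩).trans_eq ?_
    unfold lagr
    rw [hswap, add_comm, add_sub_assoc, ← Finset.sum_sub_distrib, sub_eq_add_neg,
      ← Finset.sum_neg_distrib]
    congr 1
    refine Finset.sum_congr rfl fun v _ => ?_
    simp only [c]
    split_ifs with h
    · rw [max_eq_right h.le]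
      have : deg v ≠ 0 := by linarith
      field_simp
      ring
    · rw [max_eq_left (not_lt.1 h)]; simp

/-- Strong duality for fractional matchings and covers of a finite hypergraph whose edges are
nonempty. -/
theorem exists_matching_of_le_cover {V E : Type*} [Fintype V] [DecidableEq V] [Fintype E]
    (e : E → Finset V) (hne : ∀ i, (e i).Nonempty) (τ : ℝ)
    (hτ : ∀ y ∈ Set.Icc (0 : V → ℝ) 1, (∀ i, 1 ≤ ∑ v ∈ e i, y v) → τ ≤ ∑ v, y v) :
    ∃ w : E → ℝ, (∀ i, 0 ≤ w i ∧ w i ≤ 1) ∧ (∀ v, ∑ i with v ∈ e i, w i ≤ 1) ∧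
      τ ≤ ∑ i, w i := by
  obtain ⟨a, ha, b, hb, h⟩ := lagr_saddle e
  obtain ⟨w, hw, hτw⟩ := le_lagr_of_le_cover e hne τ hτ a ha
  exact exists_matching_of_le_lagr e τ b hb fun y hy => hτw.trans (h y hy w hw)

/-! ### Fractional matchings of `(1,3)`-partite 4-graphs -/

/-- Double counting of the pairs (vertex of `Q`, edge through it). -/
lemma sum_deg_left {m n : ℕ} (G : Finset (Fin m × Finset (Fin n)))
    (w : Fin m × Finset (Fin n) → ℝ) (a : Fin m → ℝ) :
    ∑ u, a u * ∑ p ∈ G.filter (fun p => p.1 = u), w p = ∑ p ∈ G, w p * a p.1 := by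
  simp only [Finset.mul_sum, Finset.sum_filter]
  rw [Finset.sum_comm]
  refine Finset.sum_congr rfl fun p _ => ?_
  simp [mul_comm]

/-- Double counting of the pairs (vertex of `P`, edge through it). -/
lemma sum_deg_right {m n : ℕ} (G : Finset (Fin m × Finset (Fin n)))
    (w : Fin m × Finset (Fin n) → ℝ) (a : Fin n → ℝ) :
    ∑ v, a v * ∑ p ∈ G.filter (fun p => v ∈ p.2), w p = ∑ p ∈ G, w p * ∑ v ∈ p.2, a v := by
  simp only [Finset.mul_sum]
  rw [Finset.sum_comm' (t' := G) (s' := fun p => p.2)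
    (by simp [and_comm])]
  refine Finset.sum_congr rfl fun p _ => Finset.sum_congr rfl fun v _ => mul_comm _ _

/-- Weak duality. -/
lemma matching_le_cover {m n : ℕ} {G : Finset (Fin m × Finset (Fin n))}
    {w : Fin m × Finset (Fin n) → ℝ} (hw : IsFracMatching m n G w)
    {pQ : Fin m → ℝ} {pP : Fin n → ℝ} (hp : IsFracCover m n G pQ pP) :
    ∑ p ∈ G, w p ≤ ∑ u, pQ u + ∑ v, pP v := by
  obtain ⟨hw0, -, hwQ, hwP⟩ := hw
  obtain ⟨hQ, hP, hc⟩ := hp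
  calc ∑ p ∈ G, w p ≤ ∑ p ∈ G, (w p * pQ p.1 + w p * ∑ v ∈ p.2, pP v) :=
        Finset.sum_le_sum fun p hp => by nlinarith [(hw0 p).1, hc p hp]
    _ = ∑ u, pQ u * ∑ p ∈ G.filter (fun p => p.1 = u), w p
        + ∑ v, pP v * ∑ p ∈ G.filter (fun p => v ∈ p.2), w p := by
        rw [sum_deg_left, sum_deg_right, Finset.sum_add_distrib]
    _ ≤ ∑ u, pQ u + ∑ v, pP v := by
        refine add_le_add (Finset.sum_le_sum fun u _ => ?_) (Finset.sum_le_sum fun v _ => ?_)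
        · exact mul_le_of_le_one_right (hQ u).1 (hwQ u)
        · exact mul_le_of_le_one_right (hP v).1 (hwP v)

/-- Strong duality: some fractional matching is as heavy as a given minimum cover. -/
lemma exists_matching_eq_cover {m n : ℕ} {H : Finset (Fin m × Finset (Fin n))}
    {pQ : Fin m → ℝ} {pP : Fin n → ℝ} (hcov : IsFracCover m n H pQ pP)
    (hmin : ∀ pQ' : Fin m → ℝ, ∀ pP' : Fin n → ℝ, IsFracCover m n H pQ' pP' →
      ∑ u, pQ u + ∑ v, pP v ≤ ∑ u, pQ' u + ∑ v, pP' v) :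
    ∃ w, IsFracMatching m n H w ∧ ∑ p ∈ H, w p = ∑ u, pQ u + ∑ v, pP v := by
  obtain ⟨w, hw0, hw1, hτ⟩ := exists_matching_of_le_cover
    (V := Fin m ⊕ Fin n) (E := H) (fun i => Finset.disjSum {i.1.1} i.1.2)
    (fun i => ⟨Sum.inl i.1.1, by simp⟩) (∑ u, pQ u + ∑ v, pP v) (by
      intro y hy hc
      rw [Fintype.sum_sum_type]
      refine hmin _ _ ⟨fun u => ⟨hy.1 _, hy.2 _⟩, fun v => ⟨hy.1 _, hy.2 _⟩, fun p hp => ?_⟩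
      simpa [Finset.sum_disjSum] using hc ⟨p, hp⟩)
  let w' : Fin m × Finset (Fin n) → ℝ := fun p => if h : p ∈ H then w ⟨p, h⟩ else 0
  have hw' : ∀ i : H, w' i.1 = w i := fun i => by simp [w']
  have hsum : ∑ p ∈ H, w' p = ∑ i, w i := by
    rw [← Finset.sum_coe_sort]
    exact Finset.sum_congr rfl fun i _ => hw' i
  have hfil : ∀ (q : Fin m × Finset (Fin n) → Prop) [DecidablePred q],
      ∑ p ∈ H.filter q, w' p = ∑ i : H with q i.1, w i := by
    intro q _
    rw [Finset.sum_filter, ← Finset.sum_coe_sort, Finset.sum_filter]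
    exact Finset.sum_congr rfl fun i _ => by rw [hw' i]
  have hmat : IsFracMatching m n H w' := by
    refine ⟨fun p => ?_, fun p hp => by simp [w', hp], fun u => ?_, fun v => ?_⟩
    · by_cases h : p ∈ H
      · simpa [w', h] using hw0 ⟨p, h⟩
      · simp [w', h]
    · rw [hfil]
      simpa [eq_comm] using hw1 (Sum.inl u)
    · rw [hfil]
      simpa using hw1 (Sum.inr v)
  exact ⟨w', hmat, le_antisymm (matching_le_cover hmat hcov) (hsum ▸ hτ)⟩

lemma nuStar_eq_of_attained {m n : ℕ} {G : Finset (Fin m × Finset (Fin n))}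
    {pQ : Fin m → ℝ} {pP : Fin n → ℝ} (hcov : IsFracCover m n G pQ pP)
    (h : ∃ w, IsFracMatching m n G w ∧ ∑ p ∈ G, w p = ∑ u, pQ u + ∑ v, pP v) :
    nuStar m n G = ∑ u, pQ u + ∑ v, pP v :=
  IsGreatest.csSup_eq ⟨h, by rintro _ ⟨w, hw, rfl⟩; exact matching_le_cover hw hcov⟩

lemma sum_filter_of_subset {α : Type*} {G K : Finset α} (h : G ⊆ K) {w : α → ℝ}
    (hw : ∀ p ∉ G, w p = 0) (q : α → Prop) [DecidablePred q] :
    ∑ p ∈ K.filter q, w p = ∑ p ∈ G.filter q, w p := by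
  refine (Finset.sum_subset (Finset.filter_subset_filter q h) fun p hp hp' => hw p ?_).symm
  simp only [Finset.mem_filter] at hp hp'
  tauto

/-- On 4-graphs with three `P`-vertices per edge, a fractional matching as heavy as a fractional
perfect matching of some other such 4-graph on the same vertices is itself perfect: both weigh
`m`, and `n = 3 * m`. -/
lemma isFracPM_of_sum_eq {m n : ℕ} {G K : Finset (Fin m × Finset (Fin n))}
    (hG : ∀ p ∈ G, p.2.card = 3) (hK : ∀ p ∈ K, p.2.card = 3)
    {w z : Fin m × Finset (Fin n) → ℝ} (hz : IsFracPM m n K z) (hw : IsFracMatching m n G w)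
    (h : ∑ p ∈ K, z p ≤ ∑ p ∈ G, w p) : IsFracPM m n G w := by
  have hcard : ∀ {F : Finset (Fin m × Finset (Fin n))} (x : Fin m × Finset (Fin n) → ℝ),
      (∀ p ∈ F, p.2.card = 3) →
      ∑ v, ∑ p ∈ F.filter (fun p => v ∈ p.2), x p = 3 * ∑ p ∈ F, x p := by
    intro F x hF
    have := sum_deg_right F x 1
    simp only [Pi.one_apply, one_mul, Finset.sum_const, nsmul_eq_mul, mul_one] at this
    rw [this, Finset.mul_sum]
    exact Finset.sum_congr rfl fun p hp => by rw [hF p hp]; push_cast; ring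
  have hleft : ∀ (F : Finset (Fin m × Finset (Fin n))) (x : Fin m × Finset (Fin n) → ℝ),
      ∑ u, ∑ p ∈ F.filter (fun p => p.1 = u), x p = ∑ p ∈ F, x p := by
    intro F x
    simpa using sum_deg_left F x 1
  obtain ⟨-, -, hzQ, hzP⟩ := hz
  obtain ⟨hw0, hws, hwQ, hwP⟩ := hw
  have hmz : ∑ p ∈ K, z p = ∑ u : Fin m, (1 : ℝ) := by
    rw [← hleft]; exact Finset.sum_congr rfl fun u _ => hzQ u
  have hnz : 3 * ∑ p ∈ K, z p = ∑ v : Fin n, (1 : ℝ) := by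
    rw [← hcard z hK]; exact Finset.sum_congr rfl fun v _ => hzP v
  refine ⟨hw0, hws, fun u => ?_, fun v => ?_⟩
  · refine (Finset.sum_eq_sum_iff_of_le fun u _ => hwQ u).1 (le_antisymm
      (Finset.sum_le_sum fun u _ => hwQ u) ?_) u (Finset.mem_univ u)
    rw [hleft]; linarith
  · refine (Finset.sum_eq_sum_iff_of_le fun v _ => hwP v).1 (le_antisymm
      (Finset.sum_le_sum fun v _ => hwP v) ?_) v (Finset.mem_univ v)
    rw [hcard w hG]; linarith

/-- Let `p = (pQ, pP)` be a minimum fractional vertex cover of a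
`(1,3)`-partite 4-graph `H`, and let `H'` consist of all 4-sets `e` with
`|e ∩ Q| = 1`, `|e ∩ P| = 3` and `∑_{v ∈ e} p(v) ≥ 1`.  Then every `H''` with
`E(H) ⊆ E(H'') ⊆ E(H')` satisfies `ν*(H) = ν*(H'')`; in particular `H''` has a
fractional perfect matching iff `H` does. -/
theorem stmt_12 (m n : ℕ) (H : Finset (Fin m × Finset (Fin n)))
    (hH3 : ∀ p ∈ H, p.2.card = 3)
    (pQ : Fin m → ℝ) (pP : Fin n → ℝ)
    (hcov : IsFracCover m n H pQ pP)
    (hmin : ∀ pQ' : Fin m → ℝ, ∀ pP' : Fin n → ℝ, IsFracCover m n H pQ' pP' →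
      ∑ u, pQ u + ∑ v, pP v ≤ ∑ u, pQ' u + ∑ v, pP' v)
    (H' : Finset (Fin m × Finset (Fin n)))
    (hH' : ∀ p : Fin m × Finset (Fin n),
      p ∈ H' ↔ (p.2.card = 3 ∧ 1 ≤ pQ p.1 + ∑ v ∈ p.2, pP v))
    (H'' : Finset (Fin m × Finset (Fin n)))
    (h1 : H ⊆ H'') (h2 : H'' ⊆ H') :
    nuStar m n H = nuStar m n H'' ∧
    ((∃ w, IsFracPM m n H'' w) ↔ (∃ w, IsFracPM m n H w)) := by
  have hcov'' : IsFracCover m n H'' pQ pP :=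
    ⟨hcov.1, hcov.2.1, fun p hp => ((hH' p).1 (h2 hp)).2⟩
  have hK : ∀ p ∈ H'', p.2.card = 3 := fun p hp => ((hH' p).1 (h2 hp)).1
  obtain ⟨w, hw, hsum⟩ := exists_matching_eq_cover hcov hmin
  have hw'' : IsFracMatching m n H'' w := by
    refine ⟨hw.1, fun p hp => hw.2.1 p fun h => hp (h1 h), fun u => ?_, fun v => ?_⟩
    · rw [sum_filter_of_subset h1 hw.2.1]; exact hw.2.2.1 u
    · rw [sum_filter_of_subset h1 hw.2.1]; exact hw.2.2.2 v
  have hsum'' : ∑ p ∈ H'', w p = ∑ u, pQ u + ∑ v, pP v := by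
    rw [← hsum]
    exact (Finset.sum_subset h1 fun p _ hp => hw.2.1 p hp).symm
  refine ⟨?_, ?_, ?_⟩
  · rw [nuStar_eq_of_attained hcov ⟨w, hw, hsum⟩, nuStar_eq_of_attained hcov'' ⟨w, hw'', hsum''⟩]
  · rintro ⟨z, hz⟩
    have hzm : IsFracMatching m n H'' z :=
      ⟨hz.1, hz.2.1, fun u => (hz.2.2.1 u).le, fun v => (hz.2.2.2 v).le⟩
    exact ⟨w, isFracPM_of_sum_eq hH3 hK hz hw (hsum ▸ matching_le_cover hzm hcov'')⟩
  · rintro ⟨z, hz⟩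
    refine ⟨z, hz.1, fun p hp => hz.2.1 p fun h => hp (h1 h), fun u => ?_, fun v => ?_⟩
    · rw [sum_filter_of_subset h1 hz.2.1]; exact hz.2.2.1 u
    · rw [sum_filter_of_subset h1 hz.2.1]; exact hz.2.2.2 v
end

section
/- Let H be a (1,3)-partite 4-graph with classes Q = {u₁,…,u_{n/3}} and P = {v₁,…,v_n}, let p be a minimum fractional vertex cover of H with p(v₁) ≤ … ≤ p(v_n) and p(u₁) ≤ … ≤ p(u_{n/3}), and let H′ be the (1,3)-partite 4-graph on V(H) whose edges are all 4-sets e with |e∩Q| = 1, |e∩P| = 3 and Σ_{v∈e} p(v) ≥ 1. Suppose deg_H({u,v}) + deg_H({u,v′}) > (2/3)n² − (8/3)n + 2 whenever deg_H({u,v,v′}) > 0 (u ∈ Q, v,v′ ∈ P). Then there exists a (1,3)-partite 4-graph H″ on V(H) such that: (1) E(H) ⊆ E(H″) ⊆ E(H′); (2) H″ is stable with respect to the given labeling; and (3) for any u ∈ Q and v, v′ ∈ P with deg_{H″}({u,v,v′}) > 0, deg_{H″}({u,v}) + deg_{H″}({u,v′}) > (2/3)n² − (8/3)n + 2. -/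
/-- The order `e ≺ e'` on potential edges: `e = (i, {j₁ < j₂ < j₃})` precedes
`e' = (i', {j₁' < j₂' < j₃'})` if `i ≤ i'` and `jₖ ≤ jₖ'` for all `k ∈ [3]`
(compared via the increasingly sorted lists of `P`-indices). -/
def EdgePrec (m n : ℕ) (e e' : Fin m × Finset (Fin n)) : Prop :=
  e.1 ≤ e'.1 ∧ List.Forall₂ (· ≤ ·) (e.2.sort (· ≤ ·)) (e'.2.sort (· ≤ ·))

/-- `H₁` is stable: if `e ≺ e'` (both `(1,3)`-partite 4-sets) and `e ∈ E(H₁)`,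
then `e' ∈ E(H₁)`. -/
def IsStable (m n : ℕ) (H₁ : Finset (Fin m × Finset (Fin n))) : Prop :=
  ∀ e ∈ H₁, ∀ e' : Fin m × Finset (Fin n), e'.2.card = 3 →
    EdgePrec m n e e' → e' ∈ H₁

theorem orderedInsert_forall₂ {α : Type*} [LinearOrder α] (l : List α) (hl : l.Pairwise (· ≤ ·)) :
    ∀ a b : α, a ≤ b →
      List.Forall₂ (· ≤ ·) (l.orderedInsert (· ≤ ·) a) (l.orderedInsert (· ≤ ·) b) := by
  induction l with
  | nil => intro a b h; simpa using h
  | cons c l ih =>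
    intro a b h
    rw [List.pairwise_cons] at hl
    have ih := ih hl.2
    have hrefl : ∀ l : List α, List.Forall₂ (· ≤ ·) l l := fun l => List.forall₂_refl l
    by_cases hb : b ≤ c
    · rw [List.orderedInsert_cons_of_le _ _ hb, List.orderedInsert_cons_of_le _ _ (h.trans hb)]
      exact List.Forall₂.cons h (hrefl _)
    · rw [List.orderedInsert_cons (r := (· ≤ ·)) (a := b), if_neg hb]
      by_cases ha : a ≤ c
      · rw [List.orderedInsert_cons_of_le _ _ ha]
        refine List.Forall₂.cons ha ?_
        -- `c` is below every entry of `l`, so `c :: l` is itself an ordered insertion into `l`.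
        have hc : l.orderedInsert (· ≤ ·) c = c :: l := by
          cases l with
          | nil => rfl
          | cons d l => exact List.orderedInsert_cons_of_le _ _ (hl.1 d (by simp))
        rw [← hc]
        exact ih c b (le_of_not_ge hb)
      · rw [List.orderedInsert_cons, if_neg ha]
        exact List.Forall₂.cons le_rfl (ih a b h)

theorem sort_insert_eq {α : Type*} [LinearOrder α] (r : Finset α) (a : α) (ha : a ∉ r) :
    (insert a r).sort (· ≤ ·) = (r.sort (· ≤ ·)).orderedInsert (· ≤ ·) a := by
  refine List.Perm.eq_of_pairwise' (r := (· ≤ ·)) (Finset.pairwise_sort _ _)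
    (List.Pairwise.orderedInsert _ _ (Finset.pairwise_sort _ _)) ?_
  refine (List.perm_of_nodup_nodup_toFinset_eq (Finset.sort_nodup _ _) ?_ ?_)
  · rw [(List.perm_orderedInsert _ _ _).nodup_iff]
    simp [ha]
  · ext x
    simp [List.mem_orderedInsert]

/-- Replacing an element of a finset by a larger one moves the sorted list up pointwise. -/
theorem sort_shift {α : Type*} [LinearOrder α] (s : Finset α) (a b : α) (ha : a ∈ s) (hb : b ∉ s)
    (hab : a ≤ b) :
    List.Forall₂ (· ≤ ·) (s.sort (· ≤ ·)) ((insert b (s.erase a)).sort (· ≤ ·)) := by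
  conv_lhs => rw [← Finset.insert_erase ha]
  rw [sort_insert_eq _ _ (by simp), sort_insert_eq _ _ (by simp [hb])]
  exact orderedInsert_forall₂ _ (Finset.pairwise_sort _ _) a b hab

theorem forall₂_le_trans {α : Type*} [LinearOrder α] {l₁ l₂ l₃ : List α}
    (h : List.Forall₂ (· ≤ ·) l₁ l₂) (h' : List.Forall₂ (· ≤ ·) l₂ l₃) :
    List.Forall₂ (· ≤ ·) l₁ l₃ := by
  induction h generalizing l₃ with
  | nil => exact h'
  | cons hab _ ih =>
    cases h' with
    | cons hbc ht => exact List.Forall₂.cons (hab.trans hbc) (ih ht)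

theorem edgePrec_trans {m n : ℕ} {e f g : Fin m × Finset (Fin n)} (h : EdgePrec m n e f)
    (h' : EdgePrec m n f g) : EdgePrec m n e g :=
  ⟨h.1.trans h'.1, forall₂_le_trans h.2 h'.2⟩

theorem edgePrec_refl {m n : ℕ} (e : Fin m × Finset (Fin n)) : EdgePrec m n e e :=
  ⟨le_rfl, List.forall₂_refl _⟩

theorem sum_le_of_forall₂_sort {α : Type*} [LinearOrder α] (f : α → ℝ) (hf : Monotone f)
    (s t : Finset α) (h : List.Forall₂ (· ≤ ·) (s.sort (· ≤ ·)) (t.sort (· ≤ ·))) :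
    ∑ v ∈ s, f v ≤ ∑ v ∈ t, f v := by
  have key : ∀ s : Finset α, ((s.sort (· ≤ ·)).map f).sum = ∑ v ∈ s, f v := by
    intro s
    rw [← List.sum_toFinset f (Finset.sort_nodup _ _), Finset.sort_toFinset]
  rw [← key, ← key]
  refine List.Forall₂.sum_le_sum ?_
  rw [List.forall₂_map_left_iff, List.forall₂_map_right_iff]
  exact h.imp fun _ _ hab => hf hab

/-- Two elements of the dominating set have distinct partners below them, namely the elements of `s`
in the same positions of the sorted lists. -/
theorem exists_pair_le {α : Type*} [LinearOrder α] {s t : Finset α}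
    (h : List.Forall₂ (· ≤ ·) (s.sort (· ≤ ·)) (t.sort (· ≤ ·))) {v v' : α} (hv : v ∈ t)
    (hv' : v' ∈ t) (hne : v ≠ v') :
    ∃ a ∈ s, ∃ a' ∈ s, a ≠ a' ∧ a ≤ v ∧ a' ≤ v' := by
  rw [← Finset.mem_sort (· ≤ ·)] at hv hv'
  obtain ⟨i, hi, rfl⟩ := List.getElem_of_mem hv
  obtain ⟨j, hj, rfl⟩ := List.getElem_of_mem hv'
  have hij : i ≠ j := fun hij => hne (by subst hij; rfl)
  have hlen := h.length_eq
  refine ⟨(s.sort (· ≤ ·))[i]'(by omega), ?_, (s.sort (· ≤ ·))[j]'(by omega), ?_, ?_, ?_, ?_⟩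
  · exact (Finset.mem_sort (· ≤ ·)).1 (List.getElem_mem _)
  · exact (Finset.mem_sort (· ≤ ·)).1 (List.getElem_mem _)
  · intro he
    exact hij ((List.Nodup.getElem_inj_iff (Finset.sort_nodup _ _)).1 he)
  · exact h.get (by omega) hi
  · exact h.get (by omega) hj

/-- In a stable `(1,3)`-partite 4-graph, `deg({u₀, a}) ≤ deg({u, b})` when `u₀ ≤ u` and `a ≤ b`. -/
theorem card_link_mono {m n : ℕ} (U : Finset (Fin m × Finset (Fin n)))
    (hU3 : ∀ p ∈ U, p.2.card = 3) (hU : IsStable m n U) {u₀ u : Fin m} {a b : Fin n}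
    (hu : u₀ ≤ u) (hab : a ≤ b) :
    (U.filter (fun p => p.1 = u₀ ∧ a ∈ p.2)).card ≤ (U.filter (fun p => p.1 = u ∧ b ∈ p.2)).card := by
  refine Finset.card_le_card_of_injOn
    (fun p => (u, if b ∈ p.2 then p.2 else insert b (p.2.erase a))) ?_ ?_
  · rintro ⟨i, s⟩ hp
    simp only [Finset.coe_filter, Set.mem_ofPred_eq] at hp ⊢
    obtain ⟨hp, rfl, ha⟩ := hp
    have h3 : s.card = 3 := hU3 _ hp
    by_cases hb : b ∈ s
    · simp only [hb, if_true, and_true]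
      exact hU _ hp _ h3 ⟨hu, List.forall₂_refl _⟩
    · simp only [hb, if_false, Finset.mem_insert_self, and_true]
      refine hU _ hp _ ?_ ⟨hu, sort_shift s a b ha hb hab⟩
      rw [Finset.card_insert_of_notMem (by simp [hb]), Finset.card_erase_of_mem ha, h3]
  · rintro ⟨i, s⟩ hp ⟨j, t⟩ hq hpq
    simp only [Finset.coe_filter, Set.mem_ofPred_eq] at hp hq
    obtain ⟨-, rfl, ha⟩ := hp
    obtain ⟨-, rfl, ha'⟩ := hq
    simp only [Prod.mk.injEq, true_and] at hpq ⊢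
    by_cases hb : b ∈ s <;> by_cases hb' : b ∈ t
    · simpa [hb, hb'] using hpq
    · simp only [hb, hb', if_true, if_false] at hpq
      -- The shifted set no longer contains `a`, whereas the unshifted one does.
      rw [hpq] at ha
      simp only [Finset.mem_insert, Finset.notMem_erase, or_false] at ha
      exact absurd (ha ▸ ha') hb'
    · simp only [hb, hb', if_true, if_false] at hpq
      rw [← hpq] at ha'
      simp only [Finset.mem_insert, Finset.notMem_erase, or_false] at ha'
      exact absurd (ha' ▸ ha) hb
    · simp only [hb, hb', if_false] at hpq
      have h := congrArg (fun r => insert a (r.erase b)) hpq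
      simpa [Finset.erase_insert, hb, hb', Finset.insert_erase, ha, ha'] using h

/-- Let `p = (pQ, pP)` be a minimum fractional vertex cover of
`H`, nondecreasing along the labelings of `Q` and `P`, let `H'` consist of all
`(1,3)`-partite 4-sets `e` with `∑_{v∈e} p(v) ≥ 1`, and suppose that
`deg_H({u,v}) + deg_H({u,v'}) > (2/3)n² - (8/3)n + 2` whenever
`deg_H({u,v,v'}) > 0`.  Then there is `H''` with `E(H) ⊆ E(H'') ⊆ E(H')`,
`H''` stable, and the same degree-sum property in `H''`. -/
theorem stmt_13 (n : ℕ) (hn : 3 ∣ n)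
    (H : Finset (Fin (n / 3) × Finset (Fin n)))
    (hH3 : ∀ p ∈ H, p.2.card = 3)
    (pQ : Fin (n / 3) → ℝ) (pP : Fin n → ℝ)
    (hcov : IsFracCover (n / 3) n H pQ pP)
    (hmin : ∀ pQ' : Fin (n / 3) → ℝ, ∀ pP' : Fin n → ℝ,
      IsFracCover (n / 3) n H pQ' pP' →
      ∑ u, pQ u + ∑ v, pP v ≤ ∑ u, pQ' u + ∑ v, pP' v)
    (hmQ : Monotone pQ) (hmP : Monotone pP)
    (H' : Finset (Fin (n / 3) × Finset (Fin n)))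
    (hH' : ∀ p : Fin (n / 3) × Finset (Fin n),
      p ∈ H' ↔ (p.2.card = 3 ∧ 1 ≤ pQ p.1 + ∑ v ∈ p.2, pP v))
    (hdeg : ∀ u : Fin (n / 3), ∀ v v' : Fin n, v ≠ v' →
      0 < (H.filter (fun p => p.1 = u ∧ v ∈ p.2 ∧ v' ∈ p.2)).card →
      (((H.filter (fun p => p.1 = u ∧ v ∈ p.2)).card
        + (H.filter (fun p => p.1 = u ∧ v' ∈ p.2)).card : ℝ)
          > (2 / 3) * (n : ℝ) ^ 2 - (8 / 3) * (n : ℝ) + 2)) :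
    ∃ H'' : Finset (Fin (n / 3) × Finset (Fin n)),
      (∀ p ∈ H'', p.2.card = 3) ∧ H ⊆ H'' ∧ H'' ⊆ H' ∧
      IsStable (n / 3) n H'' ∧
      (∀ u : Fin (n / 3), ∀ v v' : Fin n, v ≠ v' →
        0 < (H''.filter (fun p => p.1 = u ∧ v ∈ p.2 ∧ v' ∈ p.2)).card →
        (((H''.filter (fun p => p.1 = u ∧ v ∈ p.2)).card
          + (H''.filter (fun p => p.1 = u ∧ v' ∈ p.2)).card : ℝ)
            > (2 / 3) * (n : ℝ) ^ 2 - (8 / 3) * (n : ℝ) + 2)) := by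
  classical
  let U : Finset (Fin (n / 3) × Finset (Fin n)) :=
    Finset.univ.filter (fun q => q.2.card = 3 ∧ ∃ e ∈ H, EdgePrec (n / 3) n e q)
  have hmem : ∀ q, q ∈ U ↔ q.2.card = 3 ∧ ∃ e ∈ H, EdgePrec (n / 3) n e q := by
    intro q; simp [U]
  have hU3 : ∀ p ∈ U, p.2.card = 3 := fun p hp => ((hmem p).1 hp).1
  have hHU : H ⊆ U := fun p hp => (hmem p).2 ⟨hH3 p hp, p, hp, edgePrec_refl p⟩
  have hUst : IsStable (n / 3) n U := by
    intro e he e' h3 hee'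
    obtain ⟨-, f, hf, hfe⟩ := (hmem e).1 he
    exact (hmem e').2 ⟨h3, f, hf, edgePrec_trans hfe hee'⟩
  refine ⟨U, hU3, hHU, ?_, hUst, ?_⟩
  · intro q hq
    obtain ⟨h3, e, he, hle⟩ := (hmem q).1 hq
    exact (hH' q).2 ⟨h3, (hcov.2.2 e he).trans
      (add_le_add (hmQ hle.1) (sum_le_of_forall₂_sort pP hmP _ _ hle.2))⟩
  · intro u v v' hne hpos
    obtain ⟨⟨i, t⟩, hq⟩ := Finset.card_pos.1 hpos
    simp only [Finset.mem_filter] at hq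
    obtain ⟨hq, rfl, hv, hv'⟩ := hq
    obtain ⟨-, ⟨u₀, s⟩, he, hle⟩ := (hmem _).1 hq
    obtain ⟨a, ha, a', ha', haa', hav, hav'⟩ := exists_pair_le hle.2 hv hv' hne
    have hd := hdeg u₀ a a' haa'
      (Finset.card_pos.2 ⟨(u₀, s), by simpa using ⟨he, ha, ha'⟩⟩)
    have key : ∀ x y : Fin n, x ≤ y →
        ((H.filter (fun p => p.1 = u₀ ∧ x ∈ p.2)).card : ℝ)
          ≤ (U.filter (fun p => p.1 = i ∧ y ∈ p.2)).card := fun x y hxy =>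
      Nat.cast_le.2 ((Finset.card_le_card (Finset.filter_subset_filter _ hHU)).trans
        (card_link_mono U hU3 hUst hle.1 hxy))
    exact lt_of_lt_of_le hd (add_le_add (key a v hav) (key a' v' hav'))
end

section
/- Let H″ be a (1,3)-partite 4-graph with classes Q = {u₁,…,u_{n/3}} and P = {v₁,…,v_n} that is stable with respect to this labeling. If the link N_{H″}(u₁), viewed as a 3-graph on P, has a perfect matching {e₁, …, e_{n/3}}, then {e₁ ∪ {u₁}, e₂ ∪ {u₂}, …, e_{n/3} ∪ {u_{n/3}}} is a perfect matching of H″. -/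
/-- Let `H''` be a stable `(1,3)`-partite 4-graph with classes
`Q = Fin (n/3)`, `P = Fin n`.  If the link of `u₁` (the least vertex of `Q`) has
a perfect matching `e₁, …, e_{n/3}` of the 3-graph on `P`, then
`{e₁ ∪ {u₁}, …, e_{n/3} ∪ {u_{n/3}}}` is a perfect matching of `H''`. -/
theorem stmt_14 (n : ℕ) (hn : 3 ∣ n) (hpos : 0 < n / 3)
    (H'' : Finset (Fin (n / 3) × Finset (Fin n)))
    (hH3 : ∀ p ∈ H'', p.2.card = 3)
    (hstable : IsStable (n / 3) n H'')
    (f : Fin (n / 3) → Finset (Fin n))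
    (hlink : ∀ i, ((⟨0, hpos⟩ : Fin (n / 3)), f i) ∈ H'')
    (hdisj : ∀ i j, i ≠ j → Disjoint (f i) (f j))
    (hcover : ∀ v : Fin n, ∃ i, v ∈ f i) :
    ∃ M ⊆ H'', M = Finset.univ.image (fun i => (i, f i)) ∧
      (∀ p ∈ M, ∀ r ∈ M, p ≠ r → p.1 ≠ r.1 ∧ Disjoint p.2 r.2) ∧
      (∀ u : Fin (n / 3), ∃ p ∈ M, p.1 = u) ∧
      (∀ v : Fin n, ∃ p ∈ M, v ∈ p.2) := by
  refine ⟨_, ?_, rfl, ?_, ?_, ?_⟩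
  · intro p hp
    obtain ⟨i, -, rfl⟩ := Finset.mem_image.mp hp
    -- `(u₁, f i) ≺ (u_i, f i)`, since `u₁` is the least vertex of `Q`.
    exact hstable _ (hlink i) _ (hH3 (_, f i) (hlink i) :)
      ⟨Nat.zero_le _, List.forall₂_refl _⟩
  · intro p hp r hr hne
    obtain ⟨i, -, rfl⟩ := Finset.mem_image.mp hp
    obtain ⟨j, -, rfl⟩ := Finset.mem_image.mp hr
    have hij : i ≠ j := fun h => hne (by rw [h])
    exact ⟨hij, hdisj i j hij⟩
  · exact fun u => ⟨_, Finset.mem_image_of_mem _ (Finset.mem_univ u), rfl⟩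
  · intro v
    obtain ⟨i, hi⟩ := hcover v
    exact ⟨_, Finset.mem_image_of_mem _ (Finset.mem_univ i), hi⟩
end
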